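/- There exists a unique real number t ≥ 0 such that ∫₁^∞ [P(s) − (P(s)² + P(2s))/2] e^{(1−s)t} ds = 0; moreover this unique t satisfies 1.044 < t < 1.045. -/

import Mathlib

open MeasureTheory Real

/-- The prime zeta function `P(s) = ∑_p p^{-s}` (sum over all primes). -/
noncomputable def primeZeta (s : ℝ) : ℝ := ∑' p : Nat.Primes, (p.1 : ℝ) ^ (-s)

/-- The set of `k`-almost primes: positive integers with exactly `k` prime
factors counted with multiplicity. -/
def almostPrimes (k : ℕ) : Set ℕ := {n | 0 < n ∧ n.primeFactorsList.length = k}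

/-- `P_k(s) = ∑_{n ∈ N_k} n^{-s}`; note `P_0(s) = 1` since `N_0 = {1}`. -/
noncomputable def Pk (k : ℕ) (s : ℝ) : ℝ := ∑' n : almostPrimes k, (n.1 : ℝ) ^ (-s)

/-- Translated sum `f(A, h) = ∑_{a ∈ A} 1/(a (log a + h))`. -/
noncomputable def transSum (A : Set ℕ) (h : ℝ) : ℝ :=
  ∑' a : A, 1 / ((a.1 : ℝ) * (Real.log a.1 + h))

theorem pz_summable {s : ℝ} (hs : 1 < s) : Summable fun p : Nat.Primes => (p.1 : ℝ) ^ (-s) :=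
  Nat.Primes.summable_rpow.2 (by linarith)

theorem prime_two_le (p : Nat.Primes) : (2 : ℝ) ≤ (p.1 : ℝ) := by exact_mod_cast p.2.two_le

theorem prime_pos (p : Nat.Primes) : (0 : ℝ) < (p.1 : ℝ) := by linarith [prime_two_le p]

theorem q_pos (p : Nat.Primes) (s : ℝ) : 0 < (p.1 : ℝ) ^ (-s) := rpow_pos_of_pos (prime_pos p) _

theorem q_lt_one (p : Nat.Primes) {s : ℝ} (hs : 1 < s) : (p.1 : ℝ) ^ (-s) < 1 :=
  rpow_lt_one_of_one_lt_of_neg (by linarith [prime_two_le p]) (by linarith)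

/-- real zeta -/
noncomputable def Zr (s : ℝ) : ℝ := ∑' n : ℕ, (n : ℝ) ^ (-s)

theorem Zr_summable {s : ℝ} (hs : 1 < s) : Summable fun n : ℕ => (n : ℝ) ^ (-s) :=
  Real.summable_nat_rpow.2 (by linarith)

noncomputable def zHom (s : ℝ) (hs : 1 < s) : ℕ →*₀ ℝ where
  toFun n := (n : ℝ) ^ (-s)
  map_zero' := by simp only [Nat.cast_zero]; exact zero_rpow (by linarith)
  map_one' := by simp
  map_mul' m n := by
    simp only [Nat.cast_mul]
    exact mul_rpow (by positivity) (by positivity)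

theorem log_summable {s : ℝ} (hs : 1 < s) :
    Summable fun p : Nat.Primes => - log (1 - (p.1 : ℝ) ^ (-s)) := by
  have := Real.summable_log_one_add_of_summable (pz_summable hs).neg
  simpa [sub_eq_add_neg] using this.neg

theorem exp_log_tsum {s : ℝ} (hs : 1 < s) :
    exp (∑' p : Nat.Primes, - log (1 - (p.1 : ℝ) ^ (-s))) = Zr s := by
  have h1 := EulerProduct.eulerProduct_completely_multiplicative_hasProd (f := zHom s hs)
    (by simpa [zHom] using (Zr_summable hs).norm)
  have h2 := h1.tprod_eq
  have h3 := Real.rexp_tsum_eq_tprod (f := fun p : Nat.Primes => (1 - (p.1 : ℝ) ^ (-s))⁻¹)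
    (fun p => inv_pos.2 (by linarith [q_lt_one p hs]))
    (by simpa [Real.log_inv] using log_summable hs)
  simp only [Real.log_inv] at h3
  rw [h3]
  simpa [zHom, Zr] using h2

/-- a bundled prime -/
def prm (n : ℕ) (h : n.Prime) : Nat.Primes := ⟨n, h⟩

theorem prm_inj {m n : ℕ} {h h'} : prm m h = prm n h' ↔ m = n :=
  ⟨fun e => congrArg (fun p : Nat.Primes => p.1) e, fun e => by subst e; rfl⟩

/-- the primes up to 13 -/
def F6 : Finset Nat.Primes :=
  {prm 2 (by norm_num), prm 3 (by norm_num), prm 5 (by norm_num), prm 7 (by norm_num),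
    prm 11 (by norm_num), prm 13 (by norm_num)}

theorem F6_sum (f : ℕ → ℝ) : ∑ p ∈ F6, f p.1 = f 2 + f 3 + f 5 + f 7 + f 11 + f 13 := by
  unfold F6
  rw [Finset.sum_insert (by simp [prm_inj]), Finset.sum_insert (by simp [prm_inj]),
    Finset.sum_insert (by simp [prm_inj]), Finset.sum_insert (by simp [prm_inj]),
    Finset.sum_insert (by simp [prm_inj]), Finset.sum_singleton]
  simp only [prm]
  ring

theorem not_F6 {p : Nat.Primes} (hp : p ∉ F6) : 17 ≤ p.1 := by
  by_contra h
  push Not at h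
  have e : p = prm p.1 p.2 := rfl
  rw [e] at hp
  have hn := p.2
  apply hp
  unfold F6
  simp only [Finset.mem_insert, Finset.mem_singleton, prm_inj]
  clear hp e
  generalize (p.1 : ℕ) = n at *
  interval_cases n <;> first | (exfalso; revert hn; norm_num; done) | simp

noncomputable def LF (s : ℝ) : ℝ := ∑' p : {p : Nat.Primes // p ∉ F6}, - log (1 - (p.1.1 : ℝ) ^ (-s))

noncomputable def TF (s : ℝ) : ℝ := ∑' p : {p : Nat.Primes // p ∉ F6}, (p.1.1 : ℝ) ^ (-s)

theorem pz_split {s : ℝ} (hs : 1 < s) : primeZeta s =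
    ((2:ℝ) ^ (-s) + (3:ℝ) ^ (-s) + (5:ℝ) ^ (-s) + (7:ℝ) ^ (-s) + (11:ℝ) ^ (-s) + (13:ℝ) ^ (-s))
      + TF s := by
  have := (pz_summable hs).sum_add_tsum_subtype_compl F6
  rw [F6_sum (fun n => (n : ℝ) ^ (-s))] at this
  unfold primeZeta TF
  rw [← this]
  norm_num

theorem LF_summable {s : ℝ} (hs : 1 < s) :
    Summable fun p : {p : Nat.Primes // p ∉ F6} => - log (1 - (p.1.1 : ℝ) ^ (-s)) :=
  (log_summable hs).comp_injective Subtype.val_injective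

theorem TF_summable {s : ℝ} (hs : 1 < s) :
    Summable fun p : {p : Nat.Primes // p ∉ F6} => (p.1.1 : ℝ) ^ (-s) :=
  (pz_summable hs).comp_injective Subtype.val_injective

theorem LF_nonneg {s : ℝ} (hs : 1 < s) : 0 ≤ LF s := by
  apply tsum_nonneg
  intro p
  have h1 := q_lt_one p.1 hs
  have h2 := q_pos p.1 s
  linarith [log_nonpos (x := 1 - (p.1.1 : ℝ) ^ (-s)) (by linarith) (by linarith)]

theorem TF_nonneg {s : ℝ} : 0 ≤ TF s := tsum_nonneg fun p => (q_pos p.1 s).le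

theorem LF_eq {s : ℝ} (hs : 1 < s) : LF s = log (Zr s *
    ((1 - (2:ℝ) ^ (-s)) * (1 - (3:ℝ) ^ (-s)) * (1 - (5:ℝ) ^ (-s)) * (1 - (7:ℝ) ^ (-s))
      * (1 - (11:ℝ) ^ (-s)) * (1 - (13:ℝ) ^ (-s)))) := by
  have := (log_summable hs).sum_add_tsum_subtype_compl F6
  rw [F6_sum (fun n => - log (1 - (n : ℝ) ^ (-s)))] at this
  have h0 : ∀ a : ℝ, 1 < a → 0 < 1 - a ^ (-s) := fun a ha => by
    linarith [rpow_lt_one_of_one_lt_of_neg ha (z := -s) (by linarith)]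
  have hZ : 0 < Zr s := by rw [← exp_log_tsum hs]; exact exp_pos _
  have h2 := h0 2 (by norm_num)
  have h3 := h0 3 (by norm_num)
  have h5 := h0 5 (by norm_num)
  have h7 := h0 7 (by norm_num)
  have h11 := h0 11 (by norm_num)
  have h13 := h0 13 (by norm_num)
  rw [log_mul hZ.ne' (by positivity), log_mul (by positivity) (by positivity),
    log_mul (by positivity) (by positivity), log_mul (by positivity) (by positivity),
    log_mul (by positivity) (by positivity), log_mul (by positivity) (by positivity),
    ← exp_log_tsum hs, log_exp, ← this]
  unfold LF
  push_cast
  ring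

/-- derivative comparison -/
theorem cmp_deriv {f f' : ℝ → ℝ} {q : ℝ} (hq : 0 ≤ q) (h0 : f 0 = 0)
    (hd : ∀ x ∈ Set.Icc 0 q, HasDerivAt f (f' x) x) (hf : ∀ x ∈ Set.Icc 0 q, 0 ≤ f' x) : 0 ≤ f q := by
  have : MonotoneOn f (Set.Icc 0 q) := by
    apply monotoneOn_of_deriv_nonneg (convex_Icc 0 q)
    · exact fun x hx => (hd x hx).continuousAt.continuousWithinAt
    · intro x hx
      exact (hd x (interior_subset hx)).differentiableAt.differentiableWithinAt
    · intro x hx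
      rw [(hd x (interior_subset hx)).deriv]
      exact hf x (interior_subset hx)
  have h := this (Set.left_mem_Icc.2 hq) (Set.right_mem_Icc.2 hq) hq
  linarith

theorem hd_log (n : ℕ) {x : ℝ} (hx : x ∈ Set.Icc (0:ℝ) (1/17)) :
    HasDerivAt (fun x : ℝ => log (1 - x ^ (n+1))) (-((n+1) * x ^ n) / (1 - x ^ (n+1))) x := by
  have h1 : x ^ (n+1) < 1 := pow_lt_one₀ hx.1 (by linarith [hx.2]) (by simp)
  have := ((hasDerivAt_pow (n+1) x).const_sub 1).log (by linarith)
  simpa using this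

theorem elem1 {q : ℝ} (h0 : 0 ≤ q) (h1 : q ≤ 1/17) :
    q ≤ - log (1 - q) + log (1 - q^2) / 2 + log (1 - q^3) / 3 := by
  have := cmp_deriv (f := fun x => - log (1 - x^(0+1)) + log (1 - x^(1+1)) / 2 + log (1 - x^(2+1)) / 3 - x)
    h0 (by simp) (fun x hx => by
      have hx' : x ∈ Set.Icc (0:ℝ) (1/17) := ⟨hx.1, hx.2.trans h1⟩
      exact (((hd_log 0 hx').neg.add ((hd_log 1 hx').div_const 2)).add
        ((hd_log 2 hx').div_const 3)).sub (hasDerivAt_id x)) (fun x hx => by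
      have a0 := hx.1
      have a1 : x ≤ 1/17 := hx.2.trans h1
      have b1 : 0 < 1 - x := by linarith
      have b2 : 0 < 1 - x^2 := by nlinarith
      have b3 : 0 < 1 - x^3 := by nlinarith [mul_nonneg a0 b2.le]
      norm_num
      have : -(-1 / (1 - x)) + -(2 * x) / (1 - x^2) / 2 + -(3 * x^2) / (1 - x^3) / 3 - 1
        = x^4 * (1 - x) / ((1 - x^2) * (1 - x^3)) := by
        have e1 : 1 - x ≠ 0 := b1.ne'
        have e2 : 1 - x^2 = (1 - x) * (1 + x) := by ring
        have e4 : 1 + x ≠ 0 := by positivity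
        have e3 : 1 - x^3 ≠ 0 := b3.ne'
        rw [e2]
        field_simp
        ring
      have h : 0 ≤ x^4 * (1 - x) / ((1 - x^2) * (1 - x^3)) := by positivity
      linarith)
  simp only [zero_add, pow_one] at this
  norm_num at this
  linarith

theorem elem2 {q : ℝ} (h0 : 0 ≤ q) (h1 : q ≤ 1/17) :
    - log (1 - q) + log (1 - q^2) / 2 + 290/867 * log (1 - q^3) ≤ q := by
  have := cmp_deriv (f := fun x => x + log (1 - x^(0+1)) - log (1 - x^(1+1)) / 2 - log (1 - x^(2+1)) * (290/867))
    h0 (by simp) (fun x hx => by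
      have hx' : x ∈ Set.Icc (0:ℝ) (1/17) := ⟨hx.1, hx.2.trans h1⟩
      exact (((hasDerivAt_id x).add (hd_log 0 hx')).sub ((hd_log 1 hx').div_const 2)).sub
        ((hd_log 2 hx').mul_const (290/867))) (fun x hx => by
      have a0 := hx.1
      have a1 : x ≤ 1/17 := hx.2.trans h1
      have b1 : 0 < 1 - x := by linarith
      have b2 : 0 < 1 - x^2 := by nlinarith
      have b3 : 0 < 1 - x^3 := by nlinarith [mul_nonneg a0 b2.le]
      norm_num
      have : 1 + -1 / (1 - x) - -(2 * x) / (1 - x^2) / 2 - -(3 * x^2) / (1 - x^3) * (290/867)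
        = x^2 * (1/289 + x/289 - x^2) / ((1 + x) * (1 - x^3)) := by
        have e1 : 1 - x ≠ 0 := b1.ne'
        have e2 : 1 - x^2 = (1 - x) * (1 + x) := by ring
        have e4 : 1 + x ≠ 0 := by positivity
        have e3 : 1 - x^3 ≠ 0 := b3.ne'
        rw [e2]
        field_simp
        ring
      have h : 0 ≤ x^2 * (1/289 + x/289 - x^2) / ((1 + x) * (1 - x^3)) := by
        have : 0 ≤ 1/289 + x/289 - x^2 := by nlinarith
        positivity
      linarith)
  simp only [zero_add, pow_one] at this
  norm_num at this
  linarith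

theorem elem3 {q : ℝ} (h0 : 0 ≤ q) (h1 : q ≤ 1/17) :
    q ≤ - log (1 - q) + log (1 - q^2) / 2 := by
  have := cmp_deriv (f := fun x => - log (1 - x^(0+1)) + log (1 - x^(1+1)) / 2 - x)
    h0 (by simp) (fun x hx => by
      have hx' : x ∈ Set.Icc (0:ℝ) (1/17) := ⟨hx.1, hx.2.trans h1⟩
      exact ((hd_log 0 hx').neg.add ((hd_log 1 hx').div_const 2)).sub (hasDerivAt_id x)) (fun x hx => by
      have a0 := hx.1
      have a1 : x ≤ 1/17 := hx.2.trans h1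
      have b1 : 0 < 1 - x := by linarith
      have b2 : 0 < 1 - x^2 := by nlinarith
      norm_num
      have : -(-1 / (1 - x)) + -(2 * x) / (1 - x^2) / 2 - 1
        = x^2 / (1 - x^2) := by
        have e1 : 1 - x ≠ 0 := b1.ne'
        have e2 : 1 - x^2 = (1 - x) * (1 + x) := by ring
        have e4 : 1 + x ≠ 0 := by positivity
        rw [e2]
        field_simp
        ring
      have h : 0 ≤ x^2 / (1 - x^2) := by positivity
      linarith)
  simp only [zero_add, pow_one] at this
  norm_num at this
  linarith

theorem elem4 {q : ℝ} (h0 : 0 ≤ q) (h1 : q ≤ 1/289) :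
    - log (1 - q) + 145/289 * log (1 - q^2) ≤ q := by
  have := cmp_deriv (f := fun x => x + log (1 - x^(0+1)) - log (1 - x^(1+1)) * (145/289))
    h0 (by simp) (fun x hx => by
      have hx' : x ∈ Set.Icc (0:ℝ) (1/17) := ⟨hx.1, by linarith [hx.2.trans h1]⟩
      exact ((hasDerivAt_id x).add (hd_log 0 hx')).sub ((hd_log 1 hx').mul_const (145/289)))
    (fun x hx => by
      have a0 := hx.1
      have a1 : x ≤ 1/289 := hx.2.trans h1
      have b1 : 0 < 1 - x := by linarith
      have b2 : 0 < 1 - x^2 := by nlinarith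
      norm_num
      have : 1 + -1 / (1 - x) - -(2 * x) / (1 - x^2) * (145/289)
        = x * (1/289 - x) / (1 - x^2) := by
        have e1 : 1 - x ≠ 0 := b1.ne'
        have e2 : 1 - x^2 = (1 - x) * (1 + x) := by ring
        have e4 : 1 + x ≠ 0 := by positivity
        rw [e2]
        field_simp
        ring
      have h : 0 ≤ x * (1/289 - x) / (1 - x^2) := by
        have : 0 ≤ 1/289 - x := by linarith
        positivity
      linarith)
  simp only [zero_add, pow_one] at this
  norm_num at this
  linarith

theorem q_small (p : {p : Nat.Primes // p ∉ F6}) {s : ℝ} (hs : 1 < s) :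
    (p.1.1 : ℝ) ^ (-s) ≤ 1/17 := by
  have h17 : (17:ℝ) ≤ p.1.1 := by exact_mod_cast not_F6 p.2
  calc (p.1.1 : ℝ) ^ (-s) ≤ (p.1.1 : ℝ) ^ (-1:ℝ) :=
        rpow_le_rpow_of_exponent_le (by linarith) (by linarith)
    _ ≤ 1/17 := by
        rw [rpow_neg_one, inv_eq_one_div]
        exact one_div_le_one_div_of_le (by norm_num) h17

theorem q_small2 (p : {p : Nat.Primes // p ∉ F6}) {s : ℝ} (hs : 2 < s) :
    (p.1.1 : ℝ) ^ (-s) ≤ 1/289 := by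
  have h17 : (17:ℝ) ≤ p.1.1 := by exact_mod_cast not_F6 p.2
  calc (p.1.1 : ℝ) ^ (-s) ≤ (p.1.1 : ℝ) ^ (-2:ℝ) :=
        rpow_le_rpow_of_exponent_le (by linarith) (by linarith)
    _ ≤ 1/289 := by
        rw [rpow_neg (by linarith), inv_eq_one_div]
        apply one_div_le_one_div_of_le (by norm_num)
        norm_cast
        nlinarith [not_F6 p.2]

theorem q_pow (a : ℝ) (ha : 0 ≤ a) (s : ℝ) (k : ℕ) : (a ^ (-s)) ^ k = a ^ (-(k * s)) := by
  rw [← rpow_natCast, ← rpow_mul ha]; ring_nf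

theorem TF_le {s : ℝ} (hs : 1 < s) : TF s ≤ LF s - LF (2 * s) / 2 - LF (3 * s) / 3 := by
  have h1 := LF_summable hs
  have h2 := LF_summable (s := 2 * s) (by linarith)
  have h3 := LF_summable (s := 3 * s) (by linarith)
  have := ((h1.hasSum.sub (h2.hasSum.div_const 2)).sub (h3.hasSum.div_const 3))
  refine hasSum_le (fun p => ?_) (TF_summable hs).hasSum this
  have := elem1 (q_pos p.1 s).le (q_small p hs)
  rw [q_pow _ (prime_pos _).le, q_pow _ (prime_pos _).le] at this
  push_cast at this
  linarith

theorem le_TF {s : ℝ} (hs : 1 < s) : LF s - LF (2 * s) / 2 - LF (3 * s) * (290 / 867) ≤ TF s := by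
  have h1 := LF_summable hs
  have h2 := LF_summable (s := 2 * s) (by linarith)
  have h3 := LF_summable (s := 3 * s) (by linarith)
  have := ((h1.hasSum.sub (h2.hasSum.div_const 2)).sub (h3.hasSum.mul_right (290/867)))
  refine hasSum_le (fun p => ?_) this (TF_summable hs).hasSum
  have := elem2 (q_pos p.1 s).le (q_small p hs)
  rw [q_pow _ (prime_pos _).le, q_pow _ (prime_pos _).le] at this
  push_cast at this
  linarith

theorem TF_le2 {s : ℝ} (hs : 1 < s) : TF s ≤ LF s - LF (2 * s) / 2 := by
  have h1 := LF_summable hs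
  have h2 := LF_summable (s := 2 * s) (by linarith)
  refine hasSum_le (fun p => ?_) (TF_summable hs).hasSum (h1.hasSum.sub (h2.hasSum.div_const 2))
  have := elem3 (q_pos p.1 s).le (q_small p hs)
  rw [q_pow _ (prime_pos _).le] at this
  push_cast at this
  linarith

theorem le_TF2 {s : ℝ} (hs : 2 < s) : LF s - LF (2 * s) * (145 / 289) ≤ TF s := by
  have h1 := LF_summable (s := s) (by linarith)
  have h2 := LF_summable (s := 2 * s) (by linarith)
  refine hasSum_le (fun p => ?_) (h1.hasSum.sub (h2.hasSum.mul_right (145/289)))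
    (TF_summable (by linarith)).hasSum
  have := elem4 (q_pos p.1 s).le (q_small2 p hs)
  rw [q_pow _ (prime_pos _).le] at this
  push_cast at this
  linarith
theorem hd_rpow (x r r' y : ℝ) (h : r' = r - 1) (hx : 0 < x + y) :
    HasDerivAt (fun y : ℝ => (x + y) ^ r) (r * (x + y) ^ r') y := by
  have := ((hasDerivAt_id y).const_add x).rpow_const (p := r) (Or.inl hx.ne')
  subst h
  simpa using this

noncomputable def emT (s x : ℝ) : ℝ := x ^ (1 - s) / (s - 1) + x ^ (-s) / 2 + s * x ^ (-s - 1) / 12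

noncomputable def emE (s x y : ℝ) : ℝ := x ^ (1 - s) / (s - 1) - (x + y) ^ (1 - s) / (s - 1)
  - y / 2 * (x ^ (-s) + (x + y) ^ (-s)) + y ^ 2 / 12 * (s * x ^ (-s - 1) - s * (x + y) ^ (-s - 1))

noncomputable def emE1 (s x y : ℝ) : ℝ := ((x + y) ^ (-s) - x ^ (-s)) / 2
  + y / 2 * (s * (x + y) ^ (-s - 1)) + y / 6 * (s * x ^ (-s - 1) - s * (x + y) ^ (-s - 1))
  + y ^ 2 / 12 * (s * (s + 1) * (x + y) ^ (-s - 2))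

noncomputable def emE2 (s x y : ℝ) : ℝ := (s * x ^ (-s - 1) - s * (x + y) ^ (-s - 1)) / 6
  - y / 6 * (s * (s + 1) * (x + y) ^ (-s - 2)) - y ^ 2 / 12 * (s * (s + 1) * (s + 2) * (x + y) ^ (-s - 3))

noncomputable def emE3 (s x y : ℝ) : ℝ := y ^ 2 / 12 * (s * (s + 1) * (s + 2) * (s + 3) * (x + y) ^ (-s - 4))

theorem hdE {s x y : ℝ} (hs : 1 < s) (hx : 0 < x + y) : HasDerivAt (emE s x) (emE1 s x y) y := by
  have d0 := hd_rpow x (1 - s) (-s) y (by ring) hx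
  have d1 := hd_rpow x (-s) (-s - 1) y (by ring) hx
  have d2 := hd_rpow x (-s - 1) (-s - 2) y (by ring) hx
  have i := hasDerivAt_id y
  have := (((d0.div_const (s - 1)).const_sub (x ^ (1 - s) / (s - 1))).sub
    ((i.div_const 2).mul (d1.const_add (x ^ (-s))))).add
    (((i.pow 2).div_const 12).mul ((d2.const_mul s).const_sub (s * x ^ (-s - 1))))
  convert! this using 1
  have h : s - 1 ≠ 0 := by linarith
  unfold emE1
  simp
  field_simp
  ring

theorem hdE1 {s x y : ℝ} (hx : 0 < x + y) : HasDerivAt (emE1 s x) (emE2 s x y) y := by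
  have d1 := hd_rpow x (-s) (-s - 1) y (by ring) hx
  have d2 := hd_rpow x (-s - 1) (-s - 2) y (by ring) hx
  have d3 := hd_rpow x (-s - 2) (-s - 3) y (by ring) hx
  have i := hasDerivAt_id y
  have := ((((d1.sub_const (x ^ (-s))).div_const 2).add
    ((i.div_const 2).mul (d2.const_mul s))).add
    ((i.div_const 6).mul ((d2.const_mul s).const_sub (s * x ^ (-s - 1))))).add
    (((i.pow 2).div_const 12).mul (d3.const_mul (s * (s + 1))))
  convert! this using 1
  unfold emE2
  simp
  ring

theorem hdE2 {s x y : ℝ} (hx : 0 < x + y) : HasDerivAt (emE2 s x) (emE3 s x y) y := by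
  have d2 := hd_rpow x (-s - 1) (-s - 2) y (by ring) hx
  have d3 := hd_rpow x (-s - 2) (-s - 3) y (by ring) hx
  have d4 := hd_rpow x (-s - 3) (-s - 4) y (by ring) hx
  have i := hasDerivAt_id y
  have := ((((d2.const_mul s).const_sub (s * x ^ (-s - 1))).div_const 6).sub
    ((i.div_const 6).mul (d3.const_mul (s * (s + 1))))).sub
    (((i.pow 2).div_const 12).mul (d4.const_mul (s * (s + 1) * (s + 2))))
  convert! this using 1
  unfold emE3
  simp
  ring

theorem emE_nonneg {s x y : ℝ} (hs : 1 < s) (hx : 0 < x) (hy : 0 ≤ y) : 0 ≤ emE s x y := by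
  have p : ∀ {w z : ℝ}, z ∈ Set.Icc 0 w → 0 < x + z := fun h => by linarith [h.1]
  have s0 : 0 < s := by linarith
  have h2 : ∀ w, 0 ≤ w → 0 ≤ emE2 s x w := fun w hw =>
    cmp_deriv hw (by simp [emE2]) (fun z hz => hdE2 (p hz)) (fun z hz => by
      have := p hz
      unfold emE3; positivity)
  have h1 : ∀ w, 0 ≤ w → 0 ≤ emE1 s x w := fun w hw =>
    cmp_deriv hw (by simp [emE1]) (fun z hz => hdE1 (p hz)) (fun z hz => h2 z hz.1)
  exact cmp_deriv hy (by simp [emE]) (fun z hz => hdE hs (p hz)) (fun z hz => h1 z hz.1)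

theorem emE_le {s x y : ℝ} (hs : 1 < s) (hx : 0 < x) (hy : 0 ≤ y) :
    emE s x y ≤ s * (s + 1) * (s + 2) * (s + 3) * x ^ (-s - 4) / 720 * y ^ 5 := by
  have p : ∀ {w z : ℝ}, z ∈ Set.Icc 0 w → 0 < x + z := fun h => by linarith [h.1]
  have s0 : 0 < s := by linarith
  set c := s * (s + 1) * (s + 2) * (s + 3) * x ^ (-s - 4) with hc
  have h2 : ∀ w, 0 ≤ w → 0 ≤ c / 36 * w ^ 3 - emE2 s x w := fun w hw =>
    cmp_deriv (f := fun w => c / 36 * w ^ 3 - emE2 s x w) hw (by simp [emE2])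
      (fun z hz => ((hasDerivAt_pow 3 z).const_mul (c / 36)).sub (hdE2 (p hz))) (fun z hz => by
      have hp := p hz
      have : (x + z) ^ (-s - 4) ≤ x ^ (-s - 4) :=
        rpow_le_rpow_of_nonpos hx (by linarith [hz.1]) (by linarith)
      have h3 : emE3 s x z ≤ z ^ 2 / 12 * c := by
        unfold emE3
        rw [hc]
        gcongr
      norm_num
      linarith)
  have h1 : ∀ w, 0 ≤ w → 0 ≤ c / 144 * w ^ 4 - emE1 s x w := fun w hw =>
    cmp_deriv (f := fun w => c / 144 * w ^ 4 - emE1 s x w) hw (by simp [emE1])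
      (fun z hz => ((hasDerivAt_pow 4 z).const_mul (c / 144)).sub (hdE1 (p hz))) (fun z hz => by
      have := h2 z hz.1
      norm_num
      linarith)
  have := cmp_deriv (f := fun w => c / 720 * w ^ 5 - emE s x w) hy (by simp [emE])
      (fun z hz => ((hasDerivAt_pow 5 z).const_mul (c / 720)).sub (hdE hs (p hz))) (fun z hz => by
      have := h1 z hz.1
      norm_num
      linarith)
  linarith

theorem em_step (s x : ℝ) : emT s x - emT s (x + 1) - x ^ (-s) = emE s x 1 := by
  unfold emT emE; ring

noncomputable def emU (s x : ℝ) : ℝ := x ^ (-s - 4) + x ^ (-s - 3) / (s + 3)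

theorem emU_step {s x : ℝ} (hs : 1 < s) (hx : 0 < x) : x ^ (-s - 4) ≤ emU s x - emU s (x + 1) := by
  have := cmp_deriv (f := fun y => x ^ (-s - 3) / (s + 3) - (x + y) ^ (-s - 3) / (s + 3)
      - y * (x + y) ^ (-s - 4)) (q := 1) zero_le_one (by simp) (fun z hz => by
      have hp : 0 < x + z := by linarith [hz.1]
      exact ((((hd_rpow x (-s - 3) (-s - 4) z (by ring) hp).div_const (s + 3)).const_sub
        (x ^ (-s - 3) / (s + 3)))).sub ((hasDerivAt_id z).mul
        (hd_rpow x (-s - 4) (-s - 5) z (by ring) hp))) (fun z hz => by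
      have hp : 0 < x + z := by linarith [hz.1]
      have h0 := hz.1
      have e : -((-s - 3) * (x + z) ^ (-s - 4) / (s + 3)) = (x + z) ^ (-s - 4) := by
        have : s + 3 ≠ 0 := by linarith
        field_simp
        ring
      rw [e]
      have : 0 ≤ z * ((s + 4) * (x + z) ^ (-s - 5)) := by positivity
      simp only [id]
      linarith)
  unfold emU
  simp only [one_mul] at this
  linarith

theorem emT_tendsto {s : ℝ} (hs : 1 < s) :
    Filter.Tendsto (fun n : ℕ => emT s (16 + n)) Filter.atTop (nhds 0) := by
  have h : ∀ r : ℝ, 0 < r → Filter.Tendsto (fun n : ℕ => (16 + (n:ℝ)) ^ (-r)) Filter.atTop (nhds 0) :=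
    fun r hr => (tendsto_rpow_neg_atTop hr).comp
      (Filter.tendsto_atTop_add_const_left _ _ tendsto_natCast_atTop_atTop)
  have h1 := h (s - 1) (by linarith)
  have h2 := h s (by linarith)
  have h3 := h (s + 1) (by linarith)
  have := ((h1.div_const (s - 1)).add (h2.div_const 2)).add ((h3.const_mul s).div_const 12)
  simp only [zero_div, add_zero, mul_zero] at this
  refine this.congr fun n => ?_
  unfold emT
  rw [show -(s - 1) = 1 - s by ring, show -(s + 1) = -s - 1 by ring]

theorem tail_summable {s : ℝ} (hs : 1 < s) : Summable fun n : ℕ => (16 + (n:ℝ)) ^ (-s) := by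
  have := (summable_nat_add_iff 16).2 (Zr_summable hs)
  simpa [add_comm] using this

theorem tail_le {s : ℝ} (hs : 1 < s) : ∑' n : ℕ, (16 + (n:ℝ)) ^ (-s) ≤ emT s 16 := by
  apply Real.tsum_le_of_sum_range_le (fun n => by positivity)
  intro n
  have : ∑ i ∈ Finset.range n, (16 + (i:ℝ)) ^ (-s) ≤ emT s 16 - emT s (16 + n) := by
    induction n with
    | zero => simp
    | succ n ih =>
      rw [Finset.sum_range_succ]
      have h1 := em_step s (16 + n)
      have h2 := emE_nonneg (y := 1) hs (show (0:ℝ) < 16 + n by positivity) zero_le_one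
      push_cast
      rw [← add_assoc]
      linarith
  have h3 : 0 ≤ emT s (16 + n) := by
    have : 0 < s - 1 := by linarith
    unfold emT; positivity
  linarith

theorem le_tail {s : ℝ} (hs : 1 < s) :
    emT s 16 - s * (s + 1) * (s + 2) * (s + 3) / 720 * emU s 16 ≤ ∑' n : ℕ, (16 + (n:ℝ)) ^ (-s) := by
  set C := s * (s + 1) * (s + 2) * (s + 3) / 720 with hC
  have C0 : 0 ≤ C := by
    have : 0 < s := by linarith
    positivity
  have key : ∀ n : ℕ, (emT s 16 - C * emU s 16) - emT s (16 + n) ≤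
      ∑ i ∈ Finset.range n, (16 + (i:ℝ)) ^ (-s) := by
    intro n
    have : (emT s 16 - C * emU s 16) - (emT s (16 + n) - C * emU s (16 + n)) ≤
      ∑ i ∈ Finset.range n, (16 + (i:ℝ)) ^ (-s) := by
      induction n with
      | zero => simp
      | succ n ih =>
        rw [Finset.sum_range_succ]
        have h0 : (0:ℝ) < 16 + n := by positivity
        have h1 := em_step s (16 + n)
        have h2 := emE_le (y := 1) hs h0 zero_le_one
        have h3 := mul_le_mul_of_nonneg_left (emU_step hs h0) C0
        push_cast
        rw [← add_assoc]
        have e : s * (s + 1) * (s + 2) * (s + 3) * (16 + (n:ℝ)) ^ (-s - 4) / 720 * 1 ^ 5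
          = C * (16 + (n:ℝ)) ^ (-s - 4) := by rw [hC]; ring
        rw [e] at h2
        linarith
    have h3 : 0 ≤ C * emU s (16 + n) := by
      have : 0 < s + 3 := by linarith
      unfold emU; positivity
    linarith
  have t1 := (tail_summable hs).hasSum.tendsto_sum_nat
  have t2 := (emT_tendsto hs).const_sub (emT s 16 - C * emU s 16)
  rw [sub_zero] at t2
  exact le_of_tendsto_of_tendsto' t2 t1 key

noncomputable def zs15 (a b c d e f : ℝ) : ℝ :=
  1 + a + b + a * a + c + a * b + d + a * a * a + b * b + a * c + e + a * a * b + f + a * d + b * c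

theorem Zr_split {s : ℝ} (hs : 1 < s) : Zr s =
    zs15 ((2:ℝ) ^ (-s)) ((3:ℝ) ^ (-s)) ((5:ℝ) ^ (-s)) ((7:ℝ) ^ (-s)) ((11:ℝ) ^ (-s)) ((13:ℝ) ^ (-s))
      + ∑' n : ℕ, (16 + (n:ℝ)) ^ (-s) := by
  have h := (Zr_summable hs).sum_add_tsum_nat_add 16
  unfold Zr
  rw [← h]
  have e : ∑' (i : ℕ), ((i + 16 : ℕ) : ℝ) ^ (-s) = ∑' n : ℕ, (16 + (n:ℝ)) ^ (-s) := by
    congr 1; ext n; push_cast; rw [add_comm]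
  rw [e]
  congr 1
  have m : ∀ x y : ℝ, 0 ≤ x → 0 ≤ y → (x * y) ^ (-s) = x ^ (-s) * y ^ (-s) := fun x y hx hy =>
    mul_rpow hx hy
  simp only [Finset.sum_range_succ, Finset.sum_range_zero]
  push_cast
  rw [zero_rpow (by linarith), one_rpow]
  rw [show (4:ℝ) = 2 * 2 by norm_num, show (6:ℝ) = 2 * 3 by norm_num, show (8:ℝ) = 2 * 2 * 2 by norm_num,
    show (9:ℝ) = 3 * 3 by norm_num, show (10:ℝ) = 2 * 5 by norm_num, show (12:ℝ) = 2 * 2 * 3 by norm_num,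
    show (14:ℝ) = 2 * 7 by norm_num, show (15:ℝ) = 3 * 5 by norm_num]
  rw [m (2 * 2) 2 (by norm_num) (by norm_num), m (2 * 2) 3 (by norm_num) (by norm_num),
    m 2 2 (by norm_num) (by norm_num), m 2 3 (by norm_num) (by norm_num),
    m 3 3 (by norm_num) (by norm_num), m 2 5 (by norm_num) (by norm_num),
    m 2 7 (by norm_num) (by norm_num), m 3 5 (by norm_num) (by norm_num)]
  unfold zs15
  ring

theorem pow16 (s : ℝ) : (16:ℝ) ^ (-s) = ((2:ℝ) ^ (-s)) ^ 4 := by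
  rw [q_pow _ (by norm_num), show (16:ℝ) = 2 ^ (4:ℝ) by norm_num, ← rpow_mul (by norm_num)]
  congr 1; push_cast; ring

theorem pow16k (s : ℝ) (k : ℕ) : (16:ℝ) ^ (-s - k) = (16:ℝ) ^ (-s) / 16 ^ k := by
  rw [rpow_sub (by norm_num), rpow_natCast]

theorem Zr_le {s : ℝ} (hs : 1 < s) : Zr s ≤
    zs15 ((2:ℝ) ^ (-s)) ((3:ℝ) ^ (-s)) ((5:ℝ) ^ (-s)) ((7:ℝ) ^ (-s)) ((11:ℝ) ^ (-s)) ((13:ℝ) ^ (-s))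
      + (((2:ℝ) ^ (-s)) ^ 4 * 16 / (s - 1) + ((2:ℝ) ^ (-s)) ^ 4 / 2 + s * ((2:ℝ) ^ (-s)) ^ 4 / 192) := by
  rw [Zr_split hs]
  have := tail_le hs
  unfold emT at this
  have e1 := pow16k s 1
  have e0 : (16:ℝ) ^ (1 - s) = 16 * (16:ℝ) ^ (-s) := by
    rw [sub_eq_add_neg, rpow_add (by norm_num), rpow_one]
  push_cast at e1
  rw [e0, e1, pow16] at this
  refine add_le_add le_rfl (this.trans (le_of_eq ?_))
  ring

theorem le_Zr {s : ℝ} (hs : 1 < s) :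
    zs15 ((2:ℝ) ^ (-s)) ((3:ℝ) ^ (-s)) ((5:ℝ) ^ (-s)) ((7:ℝ) ^ (-s)) ((11:ℝ) ^ (-s)) ((13:ℝ) ^ (-s))
      + (((2:ℝ) ^ (-s)) ^ 4 * 16 / (s - 1) + ((2:ℝ) ^ (-s)) ^ 4 / 2 + s * ((2:ℝ) ^ (-s)) ^ 4 / 192)
      - s * (s + 1) * (s + 2) * (s + 19) * ((2:ℝ) ^ (-s)) ^ 4 / 47185920 ≤ Zr s := by
  rw [Zr_split hs]
  have := le_tail hs
  unfold emT emU at this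
  have e1 := pow16k s 1
  have e3 := pow16k s 3
  have e4 := pow16k s 4
  have e0 : (16:ℝ) ^ (1 - s) = 16 * (16:ℝ) ^ (-s) := by
    rw [sub_eq_add_neg, rpow_add (by norm_num), rpow_one]
  push_cast at e1 e3 e4
  rw [e0, e1, e3, e4, pow16] at this
  rw [add_sub_assoc]
  refine add_le_add le_rfl (le_trans (le_of_eq ?_) this)
  have : s + 3 ≠ 0 := by linarith
  have : s - 1 ≠ 0 := by linarith
  field_simp
  ring
/-- force evaluation -/
def frc {α : Type} (n : ℕ) (k : ℕ → α) : α := match n with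
  | 0 => k 0
  | m + 1 => k (Nat.succ m)

theorem frc_eq {α : Type} (n : ℕ) (k : ℕ → α) : frc n k = k n := by cases n <;> rfl

/-- fixed-point scale -/
@[irreducible] def SC : ℕ := 2 ^ 80

def stLo (z n c : ℕ) : ℕ := SC + z * c / (SC * (n + 1))
def stHi (z n c : ℕ) : ℕ := SC + (z * c / (SC * (n + 1)) + 1)

noncomputable def horLo (z n : ℕ) : ℕ → ℕ :=
  Nat.rec (fun c => c) (fun n ih c => ih (stLo z n c)) n

noncomputable def horHi (z n : ℕ) : ℕ → ℕ :=
  Nat.rec (fun c => c) (fun n ih c => ih (stHi z n c)) n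

noncomputable def expLo (y : ℕ) : ℕ := frc (y / 256) fun z => (horLo z 12 SC) ^ 256 / SC ^ 255
noncomputable def expHi (y : ℕ) : ℕ := frc (y / 256 + 1) fun z =>
  bif Nat.ble z SC then (horHi z 12 (2 * SC)) ^ 256 / SC ^ 255 + 1 else SC * 3 ^ (y / SC + 1)

/-- crude logarithm (only a guess) -/
noncomputable def logGuess (y : ℕ) : ℕ :=
  frc (Nat.log2 y - 80) fun j =>
  frc (y / 2 ^ j) fun m =>
  frc ((m - SC) * SC / (m + SC)) fun z =>
  frc (z * z / SC) fun w =>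
  frc (SC + w * (SC / 3 + w * (SC / 5 + w * (SC / 7) / SC) / SC) / SC) fun r =>
  2 * z * r / SC + j * 837963523372001241319687

noncomputable def logLo (y : ℕ) : ℕ := bif Nat.beq y 0 then 0 else
  frc (logGuess y) fun u => (u + SC) - (expHi u * SC / y + 1)
noncomputable def logHi (y : ℕ) : ℕ := frc (logGuess y) fun u => (u + (y * SC / expLo u + 1)) - SC

/-- bounds of e^{-y} -/
noncomputable def eLo (y : ℕ) : ℕ := SC * SC / expHi y
noncomputable def eHi (y : ℕ) : ℕ := SC * SC / expLo y + 1
/-- lower/upper product -/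
noncomputable def mLo (a b : ℕ) : ℕ := a * b / SC
noncomputable def mHi (a b : ℕ) : ℕ := a * b / SC + 1

/-- six numbers attached to the primes 2,3,5,7,11,13 -/
structure V6 where
  a : ℕ
  b : ℕ
  c : ℕ
  d : ℕ
  e : ℕ
  f : ℕ

noncomputable def mul6 {α : Type} (m : ℕ → ℕ → ℕ) (u v : V6) (k : V6 → α) : α :=
  frc (m u.a v.a) fun a => frc (m u.b v.b) fun b => frc (m u.c v.c) fun c =>
  frc (m u.d v.d) fun d => frc (m u.e v.e) fun e => frc (m u.f v.f) fun f =>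
  k ⟨a, b, c, d, e, f⟩

noncomputable def sum6 (u : V6) : ℕ := u.a + u.b + u.c + u.d + u.e + u.f

/-- sum of n^{-s} for n = 1,...,15 -/
noncomputable def zSum (m : ℕ → ℕ → ℕ) (u : V6) : ℕ :=
  frc (m u.a u.a) fun a2 =>
  SC + u.a + u.b + a2 + u.c + m u.a u.b + u.d + m a2 u.a + m u.b u.b + m u.a u.c + u.e
    + m a2 u.b + u.f + m u.a u.d + m u.b u.c

/-- bounds of zeta(1+y) -/
noncomputable def zLo (y : ℕ) (u v : V6) : ℕ :=
  frc (mLo u.a u.a) fun a2 => frc (mLo a2 a2) fun q =>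
  frc (mHi v.a v.a) fun A2 => frc (mHi A2 A2) fun Q =>
  frc (SC + y) fun s =>
  (zSum mLo u + q * (16 * SC) / y + q / 2 + s * q / (192 * SC))
    - (s * (s + SC) * (s + 2 * SC) * (s + 19 * SC) * Q / (47185920 * SC ^ 4) + 1)

noncomputable def zHi (y : ℕ) (v : V6) : ℕ :=
  frc (mHi v.a v.a) fun a2 => frc (mHi a2 a2) fun q =>
  frc (SC + y) fun s =>
  zSum mHi v + (q * (16 * SC) / y + 1) + (q / 2 + 1) + (s * q / (192 * SC) + 1)

/-- product of (1 - q_p) -/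
noncomputable def pr6 (m : ℕ → ℕ → ℕ) (u : V6) : ℕ :=
  m (m (m (SC - u.a) (SC - u.b)) (m (SC - u.c) (SC - u.d))) (m (SC - u.e) (SC - u.f))

noncomputable def LLo (y : ℕ) (u v : V6) : ℕ := frc (mLo (zLo y u v) (pr6 mLo v)) logLo
noncomputable def LHi (y : ℕ) (u v : V6) : ℕ := frc (mHi (zHi y v) (pr6 mHi u)) logHi

noncomputable def lpLo : V6 := ⟨837963523372001241319451, 1328140761516789728034710, 1945691047408252574549552,
  2352461021840760917957668, 2898877508017814808659199, 3100833504239006258299158⟩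
noncomputable def lpHi : V6 := ⟨837963523372001241319963, 1328140761516806456281840, 1945691047408252574955973,
  2352461021845478810434028, 2898877508017815040135610, 3100833504239403274520164⟩

noncomputable def qLo (p x l : ℕ) : ℕ := eLo (x * l / SC + 1) / p
noncomputable def qHi (p x l : ℕ) : ℕ := eHi (x * l / SC) / p + 1

noncomputable def qs {α : Type} (x : ℕ) (k : V6 → V6 → α) : α :=
  frc (qLo 2 x lpHi.a) fun a => frc (qLo 3 x lpHi.b) fun b => frc (qLo 5 x lpHi.c) fun c =>
  frc (qLo 7 x lpHi.d) fun d => frc (qLo 11 x lpHi.e) fun e => frc (qLo 13 x lpHi.f) fun f =>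
  frc (qHi 2 x lpLo.a) fun a' => frc (qHi 3 x lpLo.b) fun b' => frc (qHi 5 x lpLo.c) fun c' =>
  frc (qHi 7 x lpLo.d) fun d' => frc (qHi 11 x lpLo.e) fun e' => frc (qHi 13 x lpLo.f) fun f' =>
  k ⟨a, b, c, d, e, f⟩ ⟨a', b', c', d', e', f'⟩

/-- lower bounds for P(1+x), P(2+2x) -/
noncomputable def nodeLo {α : Type} (x : ℕ) (k : ℕ → ℕ → α) : α :=
  qs x fun u v =>
  mul6 mLo u u fun u2 => mul6 mHi v v fun v2 =>
  mul6 mLo u2 u fun u3 => mul6 mHi v2 v fun v3 =>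
  mul6 mLo u2 u2 fun u4 => mul6 mHi v2 v2 fun v4 =>
  frc (sum6 u + LLo x u v - (LHi (2 * x + SC) u2 v2 / 2 + LHi (3 * x + 2 * SC) u3 v3 * 290 / 867 + 2)) fun A =>
  frc (sum6 u2 + LLo (2 * x + SC) u2 v2 - (LHi (4 * x + 3 * SC) u4 v4 * 145 / 289 + 1)) fun B =>
  k A B

/-- upper bounds for P(1+x), P(2+2x) -/
noncomputable def nodeHi {α : Type} (x : ℕ) (k : ℕ → ℕ → α) : α :=
  qs x fun u v =>
  mul6 mLo u u fun u2 => mul6 mHi v v fun v2 =>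
  mul6 mLo u2 u fun u3 => mul6 mHi v2 v fun v3 =>
  mul6 mLo u2 u2 fun u4 => mul6 mHi v2 v2 fun v4 =>
  frc (sum6 v + LHi x u v - (LLo (2 * x + SC) u2 v2 / 2 + LLo (3 * x + 2 * SC) u3 v3 / 3)) fun A =>
  frc (sum6 v2 + LHi (2 * x + SC) u2 v2 - LLo (4 * x + 3 * SC) u4 v4 / 2) fun B =>
  k A B

/-- lower bounds for the integrands: `A` at t = 1.044, `B` at t = 1.045 -/
noncomputable def fLo {α : Type} (x : ℕ) (k : ℕ → ℕ → α) : α :=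
  nodeLo x fun P Q =>
  frc (mLo P (eLo (x * 1044 / 1000 + 1))) fun A =>
  frc (mLo ((mLo P P + Q) / 2) (eLo (x * 1045 / 1000 + 1))) fun B => k A B

/-- upper bounds for the integrands: `A` at t = 1.045, `B` at t = 1.044 -/
noncomputable def fHi {α : Type} (x : ℕ) (k : ℕ → ℕ → α) : α :=
  nodeHi x fun P Q =>
  frc (mHi P (eHi (x * 1045 / 1000))) fun A =>
  frc (mHi ((mHi P P + Q) / 2 + 1) (eHi (x * 1044 / 1000))) fun B => k A B

/-- Gauss rule on [a, a+4g] -/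
noncomputable def gauss {α : Type} (a g : ℕ) (k : ℕ → ℕ → α) : α :=
  frc (2 * g) fun h => frc (a + h) fun m => frc (h * 812223 / 1048576) fun d =>
  frc (m - d) fun x1 => frc (m + d) fun x3 =>
  fLo x1 fun A1 B1 => fLo m fun A2 B2 => fLo x3 fun A3 B3 =>
  frc (h * (5 * A1 + 8 * A2 + 5 * A3) / (9 * SC)) fun A =>
  frc (h * (5 * B1 + 8 * B2 + 5 * B3) / (9 * SC)) fun B => k A B

/-- Boole rule on [a, a+4g] -/
noncomputable def boole {α : Type} (a g : ℕ) (k : ℕ → ℕ → α) : α :=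
  frc (a + g) fun x1 => frc (a + 2 * g) fun x2 => frc (a + 3 * g) fun x3 => frc (a + 4 * g) fun x4 =>
  fHi a fun A0 B0 => fHi x1 fun A1 B1 => fHi x2 fun A2 B2 => fHi x3 fun A3 B3 => fHi x4 fun A4 B4 =>
  frc (g * (14 * A0 + 64 * A1 + 24 * A2 + 64 * A3 + 14 * A4) / (45 * SC) + 1) fun A =>
  frc (g * (14 * B0 + 64 * B1 + 24 * B2 + 64 * B3 + 14 * B4) / (45 * SC) + 1) fun B => k A B

/-- start of the mesh and quarter panel widths -/
def mesh0 : ℕ := 2 ^ 44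
def mesh : List ℕ :=
  [15 * 2 ^ 42, 15 * 2 ^ 46, 7 * 2 ^ 50, 7 * 2 ^ 53, 7 * 2 ^ 56, 7 * 2 ^ 59, 3 * 2 ^ 62, 3 * 2 ^ 64, 2 ^ 66, 2 ^ 67, 2 ^ 68, 2 ^ 69, 2 ^ 70, 2 ^ 71, 2 ^ 72, 2 ^ 73, 2 ^ 74, 2 ^ 74, 2 ^ 74, 2 ^ 75, 2 ^ 75, 2 ^ 76, 2 ^ 76, 2 ^ 77, 2 ^ 77, 2 ^ 78, 2 ^ 78, 2 ^ 79, 2 ^ 79, 2 ^ 80, 2 ^ 80]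

theorem SC_pos : (0:ℝ) < (SC:ℝ) := by unfold SC; positivity

theorem SC_pos' : 0 < SC := by unfold SC; positivity

theorem div_le_r (a b : ℕ) : ((a / b : ℕ) : ℝ) ≤ (a:ℝ) / b := Nat.cast_div_le

theorem r_le_div (a b : ℕ) (hb : 0 < b) : (a:ℝ) / b ≤ ((a / b : ℕ) : ℝ) + 1 := by
  have h : a ≤ b * (a / b + 1) := by
    have := Nat.div_add_mod a b
    have := Nat.mod_lt a hb
    rw [Nat.mul_add]; omega
  have hb' : (0:ℝ) < b := by exact_mod_cast hb
  rw [div_le_iff₀ hb', mul_comm]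
  exact_mod_cast h

theorem r_sub_le (a b : ℕ) : (a:ℝ) - b ≤ ((a - b : ℕ) : ℝ) := by
  rcases le_total b a with h | h
  · rw [Nat.cast_sub h]
  · have : (a:ℝ) ≤ b := by exact_mod_cast h
    have : (0:ℝ) ≤ ((a - b : ℕ) : ℝ) := Nat.cast_nonneg _
    linarith

def LoB (n : ℕ) (r : ℝ) : Prop := (n:ℝ) ≤ r * SC
def HiB (n : ℕ) (r : ℝ) : Prop := r * SC ≤ (n:ℝ)

theorem LoB.nonneg {n : ℕ} {r : ℝ} (h : LoB n r) : 0 ≤ r := by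
  have : (0:ℝ) ≤ r * SC := (Nat.cast_nonneg n).trans h
  exact nonneg_of_mul_nonneg_left this SC_pos

theorem LoB.mono {n : ℕ} {r q : ℝ} (h : LoB n r) (hq : r ≤ q) : LoB n q :=
  le_trans h (mul_le_mul_of_nonneg_right hq SC_pos.le)

theorem HiB.mono {n : ℕ} {r q : ℝ} (h : HiB n r) (hq : q ≤ r) : HiB n q :=
  le_trans (mul_le_mul_of_nonneg_right hq SC_pos.le) h

theorem LoB.add {m n : ℕ} {r q : ℝ} (h : LoB m r) (h' : LoB n q) : LoB (m + n) (r + q) := by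
  unfold LoB at *; push_cast; linarith

theorem HiB.add {m n : ℕ} {r q : ℝ} (h : HiB m r) (h' : HiB n q) : HiB (m + n) (r + q) := by
  unfold HiB at *; push_cast; linarith

theorem LoB.one : LoB SC 1 := by simp [LoB]
theorem HiB.one : HiB SC 1 := by simp [HiB]

theorem LoB.sub {m n : ℕ} {r q v : ℝ} (h : LoB m r) (h' : HiB n q) (hv : r - q ≤ v) (h0 : 0 ≤ v) :
    LoB (m - n) v := by
  rcases le_total n m with hl | hl
  · unfold LoB HiB at *
    rw [Nat.cast_sub hl]
    have := mul_le_mul_of_nonneg_right hv SC_pos.le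
    linarith
  · rw [Nat.sub_eq_zero_of_le hl]
    unfold LoB
    have := SC_pos
    push_cast
    positivity

theorem HiB.sub {m n : ℕ} {r q v : ℝ} (h : HiB m r) (h' : LoB n q) (hv : v ≤ r - q) :
    HiB (m - n) v := by
  unfold LoB HiB at *
  have := mul_le_mul_of_nonneg_right hv SC_pos.le
  have := r_sub_le m n
  linarith

theorem mLo_lo {m n : ℕ} {r q : ℝ} (h : LoB m r) (h' : LoB n q) : LoB (mLo m n) (r * q) := by
  have hr := h.nonneg
  have hq := h'.nonneg
  unfold LoB mLo at *
  refine (div_le_r _ _).trans ?_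
  rw [div_le_iff₀ SC_pos]
  push_cast
  calc (m:ℝ) * n ≤ (r * SC) * (q * SC) := by gcongr
    _ = _ := by ring

theorem mHi_hi {m n : ℕ} {r q : ℝ} (h : HiB m r) (h' : HiB n q) (hq : 0 ≤ q) :
    HiB (mHi m n) (r * q) := by
  unfold HiB mHi at *
  push_cast
  refine le_trans ?_ (r_le_div _ _ SC_pos')
  rw [le_div_iff₀ SC_pos]
  push_cast
  have := SC_pos
  calc r * q * SC * SC = (r * SC) * (q * SC) := by ring
    _ ≤ (m:ℝ) * n := by gcongr

theorem hor_ind (x : ℝ) (n : ℕ) (c : ℝ) :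
    (∑ m ∈ Finset.range n, x ^ m / (m.factorial : ℝ)) + x ^ n / (n.factorial : ℝ) * (1 + x * c / (n + 1))
    = (∑ m ∈ Finset.range (n + 1), x ^ m / (m.factorial : ℝ))
      + x ^ (n + 1) / ((n + 1).factorial : ℝ) * c := by
  rw [Finset.sum_range_succ, Nat.factorial_succ]
  push_cast
  have : (n.factorial : ℝ) ≠ 0 := by exact_mod_cast n.factorial_ne_zero
  have : (n:ℝ) + 1 ≠ 0 := by positivity
  field_simp
  ring

theorem horLo_succ (z n c : ℕ) : horLo z (n + 1) c = horLo z n (stLo z n c) := by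
  unfold horLo; rfl
theorem horHi_succ (z n c : ℕ) : horHi z (n + 1) c = horHi z n (stHi z n c) := by
  unfold horHi; rfl
theorem horLo_zero (z c : ℕ) : horLo z 0 c = c := rfl
theorem horHi_zero (z c : ℕ) : horHi z 0 c = c := rfl

theorem horLo_le (z : ℕ) (n c : ℕ) (r : ℝ) (h : LoB c r) :
    LoB (horLo z n c) ((∑ m ∈ Finset.range n, ((z:ℝ) / SC) ^ m / (m.factorial : ℝ))
      + ((z:ℝ) / SC) ^ n / (n.factorial : ℝ) * r) := by
  induction n generalizing c r with
  | zero => simpa [horLo_zero] using h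
  | succ n ih =>
    rw [horLo_succ, ← hor_ind]
    refine ih _ _ ?_
    unfold stLo
    refine LoB.one.add ?_
    unfold LoB at *
    refine (div_le_r _ _).trans ?_
    have := SC_pos
    push_cast
    rw [div_le_iff₀ (by positivity)]
    calc (z:ℝ) * c ≤ z * (r * SC) := by gcongr
      _ = _ := by field_simp

theorem horHi_le (z : ℕ) (n c : ℕ) (r : ℝ) (h : HiB c r) :
    HiB (horHi z n c) ((∑ m ∈ Finset.range n, ((z:ℝ) / SC) ^ m / (m.factorial : ℝ))
      + ((z:ℝ) / SC) ^ n / (n.factorial : ℝ) * r) := by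
  induction n generalizing c r with
  | zero => simpa [horHi_zero] using h
  | succ n ih =>
    rw [horHi_succ, ← hor_ind]
    refine ih _ _ ?_
    unfold stHi
    refine HiB.one.add ?_
    unfold HiB at *
    have := SC_pos
    push_cast
    refine le_trans ?_ (r_le_div _ _ (Nat.mul_pos SC_pos' (Nat.succ_pos n)))
    push_cast
    rw [le_div_iff₀ (by positivity)]
    calc _ = z * (r * SC) := by field_simp
      _ ≤ _ := by gcongr

theorem horLo_ge (z n c : ℕ) (h : SC ≤ c) : SC ≤ horLo z n c := by
  induction n generalizing c with
  | zero => exact h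
  | succ n ih => rw [horLo_succ]; exact ih _ (Nat.le_add_right _ _)

theorem exp256 (x : ℝ) : exp (x / 256) ^ 256 = exp x := by
  rw [← Real.exp_nat_mul]; congr 1; push_cast; ring

theorem exp256' (x S : ℝ) : (exp (x / 256) * S) ^ 256 = exp x * S * S ^ 255 := by
  rw [mul_pow, exp256, mul_assoc, ← pow_succ']

theorem expLo_lo (y : ℕ) {r : ℝ} (h : LoB y r) : LoB (expLo y) (exp r) := by
  unfold expLo
  rw [frc_eq]
  have h1 := horLo_le (y / 256) 12 SC 1 LoB.one
  have h0 := SC_pos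
  have h2 : LoB (horLo (y / 256) 12 SC) (exp (r / 256)) := by
    refine h1.mono ?_
    have := hor_ind (((y / 256 : ℕ) : ℝ) / SC) 12 0
    simp only [mul_zero, zero_div, add_zero] at this
    rw [this]
    refine (Real.sum_le_exp_of_nonneg (by positivity) 13).trans ?_
    apply exp_le_exp.2
    rw [div_le_iff₀ h0]
    have := div_le_r y 256
    unfold LoB at h
    push_cast at this
    linarith
  unfold LoB at *
  refine (div_le_r _ _).trans ?_
  push_cast
  rw [div_le_iff₀ (by positivity)]
  calc _ ≤ (exp (r / 256) * SC) ^ 256 := by gcongr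
    _ = _ := exp256' _ _

theorem expLo_ge (y : ℕ) : SC ≤ expLo y := by
  unfold expLo
  rw [frc_eq]
  have := horLo_ge (y / 256) 12 SC le_rfl
  rw [Nat.le_div_iff_mul_le (pow_pos SC_pos' _)]
  calc SC * SC ^ 255 = SC ^ 256 := by rw [← pow_succ']
    _ ≤ _ := Nat.pow_le_pow_left this _

theorem expHi_hi (y : ℕ) {r : ℝ} (h : HiB y r) : HiB (expHi y) (exp r) := by
  unfold expHi
  rw [frc_eq]
  have h0 := SC_pos
  have hy : r ≤ (y:ℝ) / SC := by
    rw [le_div_iff₀ h0]; exact h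
  rcases hb : Nat.ble (y / 256 + 1) SC with _ | _
  · simp only [cond_false]
    unfold HiB
    push_cast
    have h1 : exp r ≤ 3 ^ (y / SC + 1) := by
      have e : exp 1 ≤ 3 := by linarith [Real.exp_one_lt_d9]
      calc exp r ≤ exp (((y / SC + 1 : ℕ) : ℝ) * 1) := by
            apply exp_le_exp.2
            have := r_le_div y SC SC_pos'
            push_cast
            linarith
        _ = exp 1 ^ (y / SC + 1) := by rw [Real.exp_nat_mul]
        _ ≤ _ := by gcongr
    rw [mul_comm]
    gcongr
  · simp only [cond_true]
    have hz : y / 256 + 1 ≤ SC := Nat.le_of_ble_eq_true hb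
    have hz' : ((y / 256 + 1 : ℕ) : ℝ) / SC ≤ 1 := by
      rw [div_le_one h0]; exact_mod_cast hz
    have h1 := horHi_le (y / 256 + 1) 12 (2 * SC) 2 (by simp [HiB])
    have h2 : HiB (horHi (y / 256 + 1) 12 (2 * SC)) (exp (r / 256)) := by
      refine h1.mono ?_
      have hzn : 0 ≤ ((y / 256 + 1 : ℕ) : ℝ) / SC := by positivity
      have h3 : r / 256 ≤ ((y / 256 + 1 : ℕ) : ℝ) / SC := by
        rw [le_div_iff₀ h0]
        have := r_le_div y 256 (by norm_num)
        unfold HiB at h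
        push_cast at this ⊢
        linarith
      refine (exp_le_exp.2 h3).trans ((Real.exp_bound' hzn hz' (n := 12) (by norm_num)).trans ?_)
      have : 0 ≤ (((y / 256 + 1 : ℕ) : ℝ) / SC) ^ 12 := by positivity
      apply add_le_add le_rfl
      rw [mul_div_mul_comm]
      gcongr
      norm_num
    unfold HiB at *
    push_cast
    refine le_trans ?_ (r_le_div _ _ (pow_pos SC_pos' _))
    push_cast
    rw [le_div_iff₀ (by positivity)]
    calc _ = (exp (r / 256) * SC) ^ 256 := (exp256' _ _).symm
      _ ≤ _ := by gcongr

theorem logLo_lo (y : ℕ) {r : ℝ} (h : LoB y r) (h1 : 1 ≤ r) : LoB (logLo y) (log r) := by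
  unfold logLo
  have h0 := SC_pos
  rcases hy : Nat.beq y 0 with _ | _
  · simp only [cond_false]
    rw [frc_eq]
    generalize logGuess y = u
    have y0 : 0 < y := by
      rcases Nat.eq_zero_or_pos y with e | e
      · subst e; simp at hy
      · exact e
    have y0' : (0:ℝ) < y := by exact_mod_cast y0
    have hu := expHi_hi u (r := (u:ℝ) / SC) (by unfold HiB; rw [div_mul_cancel₀ _ h0.ne'])
    have hlog : (u:ℝ) / SC + (1 - exp ((u:ℝ) / SC) * SC / y) ≤ log r := by
      have p1 : 0 < (y:ℝ) / SC := by positivity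
      have a1 : log ((y:ℝ) / SC) ≤ log r := by
        apply log_le_log p1
        rw [div_le_iff₀ h0]; exact h
      have a2 := Real.one_sub_inv_le_log_of_pos (x := (y:ℝ) / SC / exp ((u:ℝ) / SC)) (by positivity)
      rw [log_div p1.ne' (exp_pos _).ne', log_exp] at a2
      have : ((y:ℝ) / SC / exp ((u:ℝ) / SC))⁻¹ = exp ((u:ℝ) / SC) * SC / y := by
        field_simp
      rw [this] at a2
      linarith
    have g1 : LoB (u + SC) ((u:ℝ) / SC + 1) := LoB.add (by unfold LoB; rw [div_mul_cancel₀ _ h0.ne']) LoB.one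
    refine g1.sub (q := exp ((u:ℝ) / SC) * SC / y) ?_ (by linarith) (log_nonneg h1)
    unfold HiB at *
    push_cast
    refine le_trans ?_ (r_le_div _ _ y0)
    push_cast
    rw [div_mul_eq_mul_div]
    gcongr
  · simp only [cond_true]
    unfold LoB
    have := log_nonneg h1
    push_cast
    positivity

theorem logHi_hi (y : ℕ) {r : ℝ} (h : HiB y r) (h1 : 1 ≤ r) : HiB (logHi y) (log r) := by
  unfold logHi
  have h0 := SC_pos
  rw [frc_eq]
  generalize logGuess y = u
  have hu := expLo_lo u (r := (u:ℝ) / SC) (by unfold LoB; rw [div_mul_cancel₀ _ h0.ne'])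
  have hE := expLo_ge u
  have hE0 : 0 < expLo u := lt_of_lt_of_le SC_pos' hE
  have hE' : (0:ℝ) < expLo u := by exact_mod_cast hE0
  have r0 : 0 < r := by linarith
  have hlog : log r ≤ (u:ℝ) / SC + r / exp ((u:ℝ) / SC) - 1 := by
    have a2 := Real.log_le_sub_one_of_pos (x := r / exp ((u:ℝ) / SC)) (by positivity)
    rw [log_div r0.ne' (exp_pos _).ne', log_exp] at a2
    linarith
  have g1 : HiB u ((u:ℝ) / SC) := by unfold HiB; rw [div_mul_cancel₀ _ h0.ne']
  refine (g1.add (q := r / exp ((u:ℝ) / SC)) ?_).sub LoB.one hlog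
  unfold HiB LoB at *
  push_cast
  refine le_trans ?_ (r_le_div _ _ hE0)
  push_cast
  rw [le_div_iff₀ hE']
  calc r / exp ((u:ℝ) / SC) * SC * expLo u ≤ r / exp ((u:ℝ) / SC) * SC * (exp ((u:ℝ) / SC) * SC) := by
        gcongr
    _ = r * SC * SC := by
        have := (exp_pos ((u:ℝ) / SC)).ne'
        field_simp
    _ ≤ _ := by gcongr

theorem eLo_lo (y : ℕ) {r : ℝ} (h : HiB y r) : LoB (eLo y) (exp (-r)) := by
  have h0 := SC_pos
  have h1 := expHi_hi y h
  unfold LoB eLo HiB at *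
  have h2 : (0:ℝ) < expHi y := lt_of_lt_of_le (by positivity) h1
  refine (div_le_r _ _).trans ?_
  rw [div_le_iff₀ h2, exp_neg]
  push_cast
  calc (SC:ℝ) * SC = (exp r)⁻¹ * SC * (exp r * SC) := by
        have := (exp_pos r).ne'
        field_simp
    _ ≤ _ := by gcongr

theorem eHi_hi (y : ℕ) {r : ℝ} (h : LoB y r) : HiB (eHi y) (exp (-r)) := by
  have h0 := SC_pos
  have h1 := expLo_lo y h
  have hE0 : 0 < expLo y := lt_of_lt_of_le SC_pos' (expLo_ge y)
  have hE' : (0:ℝ) < expLo y := by exact_mod_cast hE0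
  unfold LoB eHi HiB at *
  push_cast
  refine le_trans ?_ (r_le_div _ _ hE0)
  rw [le_div_iff₀ hE', exp_neg]
  push_cast
  calc (exp r)⁻¹ * SC * expLo y ≤ (exp r)⁻¹ * SC * (exp r * SC) := by gcongr
    _ = _ := by
        have := (exp_pos r).ne'
        field_simp
theorem divLo {m d : ℕ} {r : ℝ} (hd : 0 < d) (h : (m:ℝ) ≤ r * SC * d) : LoB (m / d) r := by
  unfold LoB
  refine (div_le_r _ _).trans ?_
  rw [div_le_iff₀ (by exact_mod_cast hd)]
  exact h

theorem divHi {m d : ℕ} {r : ℝ} (hd : 0 < d) (h : r * SC * d ≤ (m:ℝ)) : HiB (m / d + 1) r := by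
  unfold HiB
  push_cast
  refine le_trans ?_ (r_le_div _ _ hd)
  rw [le_div_iff₀ (by exact_mod_cast hd)]
  exact h

theorem HiB.le {m n : ℕ} {r : ℝ} (h : HiB m r) (hm : m ≤ n) : HiB n r :=
  le_trans h (by exact_mod_cast hm)
theorem LoB.le {m n : ℕ} {r : ℝ} (h : LoB m r) (hm : n ≤ m) : LoB n r :=
  le_trans (by exact_mod_cast hm) h

def Lo6 (u : V6) (s : ℝ) : Prop := LoB u.a ((2:ℝ) ^ (-s)) ∧ LoB u.b ((3:ℝ) ^ (-s)) ∧
  LoB u.c ((5:ℝ) ^ (-s)) ∧ LoB u.d ((7:ℝ) ^ (-s)) ∧ LoB u.e ((11:ℝ) ^ (-s)) ∧ LoB u.f ((13:ℝ) ^ (-s))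

def Hi6 (u : V6) (s : ℝ) : Prop := HiB u.a ((2:ℝ) ^ (-s)) ∧ HiB u.b ((3:ℝ) ^ (-s)) ∧
  HiB u.c ((5:ℝ) ^ (-s)) ∧ HiB u.d ((7:ℝ) ^ (-s)) ∧ HiB u.e ((11:ℝ) ^ (-s)) ∧ HiB u.f ((13:ℝ) ^ (-s))

theorem pw_mul (p : ℝ) (hp : 0 < p) (s t r : ℝ) (h : r = s + t) : p ^ (-s) * p ^ (-t) = p ^ (-r) := by
  rw [← rpow_add hp]; congr 1; rw [h]; ring

theorem mul6_lo {u v : V6} {s t r : ℝ} (hu : Lo6 u s) (hv : Lo6 v t) (h : r = s + t) :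
    ∃ w, Lo6 w r ∧ ∀ {α : Type} (k : V6 → α), mul6 mLo u v k = k w := by
  refine ⟨⟨mLo u.a v.a, mLo u.b v.b, mLo u.c v.c, mLo u.d v.d, mLo u.e v.e, mLo u.f v.f⟩, ?_, fun k => by simp only [mul6, frc_eq]⟩
  obtain ⟨u1, u2, u3, u4, u5, u6⟩ := hu
  obtain ⟨v1, v2, v3, v4, v5, v6⟩ := hv
  refine ⟨?_, ?_, ?_, ?_, ?_, ?_⟩
  · rw [← pw_mul 2 (by norm_num) s t r h]; exact mLo_lo u1 v1
  · rw [← pw_mul 3 (by norm_num) s t r h]; exact mLo_lo u2 v2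
  · rw [← pw_mul 5 (by norm_num) s t r h]; exact mLo_lo u3 v3
  · rw [← pw_mul 7 (by norm_num) s t r h]; exact mLo_lo u4 v4
  · rw [← pw_mul 11 (by norm_num) s t r h]; exact mLo_lo u5 v5
  · rw [← pw_mul 13 (by norm_num) s t r h]; exact mLo_lo u6 v6

theorem mul6_hi {u v : V6} {s t r : ℝ} (hu : Hi6 u s) (hv : Hi6 v t) (h : r = s + t) :
    ∃ w, Hi6 w r ∧ ∀ {α : Type} (k : V6 → α), mul6 mHi u v k = k w := by
  refine ⟨⟨mHi u.a v.a, mHi u.b v.b, mHi u.c v.c, mHi u.d v.d, mHi u.e v.e, mHi u.f v.f⟩, ?_, fun k => by simp only [mul6, frc_eq]⟩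
  obtain ⟨u1, u2, u3, u4, u5, u6⟩ := hu
  obtain ⟨v1, v2, v3, v4, v5, v6⟩ := hv
  refine ⟨?_, ?_, ?_, ?_, ?_, ?_⟩
  · rw [← pw_mul 2 (by norm_num) s t r h]; exact mHi_hi u1 v1 (by positivity)
  · rw [← pw_mul 3 (by norm_num) s t r h]; exact mHi_hi u2 v2 (by positivity)
  · rw [← pw_mul 5 (by norm_num) s t r h]; exact mHi_hi u3 v3 (by positivity)
  · rw [← pw_mul 7 (by norm_num) s t r h]; exact mHi_hi u4 v4 (by positivity)
  · rw [← pw_mul 11 (by norm_num) s t r h]; exact mHi_hi u5 v5 (by positivity)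
  · rw [← pw_mul 13 (by norm_num) s t r h]; exact mHi_hi u6 v6 (by positivity)

theorem zSum_lo {u : V6} {a b c d e f : ℝ} (h1 : LoB u.a a) (h2 : LoB u.b b) (h3 : LoB u.c c)
    (h4 : LoB u.d d) (h5 : LoB u.e e) (h6 : LoB u.f f) : LoB (zSum mLo u) (zs15 a b c d e f) := by
  unfold zSum zs15
  rw [frc_eq]
  have A2 := mLo_lo h1 h1
  exact ((((((((((((((LoB.one.add h1).add h2).add A2).add h3).add (mLo_lo h1 h2)).add h4).add
    (mLo_lo A2 h1)).add (mLo_lo h2 h2)).add (mLo_lo h1 h3)).add h5).add (mLo_lo A2 h2)).add h6).add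
    (mLo_lo h1 h4)).add (mLo_lo h2 h3))

theorem zSum_hi {u : V6} {a b c d e f : ℝ} (h1 : HiB u.a a) (h2 : HiB u.b b) (h3 : HiB u.c c)
    (h4 : HiB u.d d) (h5 : HiB u.e e) (h6 : HiB u.f f) (a0 : 0 ≤ a) (b0 : 0 ≤ b) (c0 : 0 ≤ c)
    (d0 : 0 ≤ d) : HiB (zSum mHi u) (zs15 a b c d e f) := by
  unfold zSum zs15
  rw [frc_eq]
  have A2 := mHi_hi h1 h1 a0
  exact ((((((((((((((HiB.one.add h1).add h2).add A2).add h3).add (mHi_hi h1 h2 b0)).add h4).add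
    (mHi_hi A2 h1 a0)).add (mHi_hi h2 h2 b0)).add (mHi_hi h1 h3 c0)).add h5).add (mHi_hi A2 h2 b0)).add
    h6).add (mHi_hi h1 h4 d0)).add (mHi_hi h2 h3 c0))

theorem Zr_pos {s : ℝ} (hs : 1 < s) : 0 < Zr s := by rw [← exp_log_tsum hs]; exact exp_pos _

theorem zHi_hi {y : ℕ} {s : ℝ} {v : V6} (hs : 1 < s) (hy : (y:ℝ) = (s - 1) * SC) (hv : Hi6 v s) :
    HiB (zHi y v) (Zr s) := by
  have S0 := SC_pos
  have y0' : (0:ℝ) < y := by rw [hy]; exact mul_pos (by linarith) S0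
  have y0 : 0 < y := by exact_mod_cast y0'
  obtain ⟨h1, h2, h3, h4, h5, h6⟩ := hv
  unfold zHi
  simp only [frc_eq]
  have A2 := mHi_hi h1 h1 (by positivity)
  have A4 := mHi_hi A2 A2 (by positivity)
  refine HiB.mono ?_ (Zr_le hs)
  have e4 : ((2:ℝ) ^ (-s)) ^ 4 = (2:ℝ) ^ (-s) * (2:ℝ) ^ (-s) * ((2:ℝ) ^ (-s) * (2:ℝ) ^ (-s)) := by ring
  rw [e4]
  set q := (2:ℝ) ^ (-s) * (2:ℝ) ^ (-s) * ((2:ℝ) ^ (-s) * (2:ℝ) ^ (-s)) with hq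
  have hz := zSum_hi h1 h2 h3 h4 h5 h6 (by positivity) (by positivity) (by positivity) (by positivity)
  rw [← add_assoc (zs15 _ _ _ _ _ _), ← add_assoc (zs15 _ _ _ _ _ _)]
  refine ((hz.add (divHi y0 ?_)).add (divHi (d := 2) (by norm_num) ?_)).add
    (divHi (d := 192 * SC) (Nat.mul_pos (by norm_num) SC_pos') ?_)
  · unfold HiB at A4
    rw [hy]; push_cast
    have : s - 1 ≠ 0 := by linarith
    calc q * 16 / (s - 1) * SC * ((s - 1) * SC) = (q * SC) * (16 * SC) := by field_simp
      _ ≤ _ := by gcongr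
  · unfold HiB at A4
    push_cast; linarith
  · unfold HiB at A4
    push_cast
    rw [hy]
    calc s * q / 192 * SC * (192 * SC) = (SC + (s - 1) * SC) * (q * SC) := by ring
      _ ≤ _ := by
        have : 0 ≤ (SC + (s - 1) * SC : ℝ) := by
          have : 0 ≤ (s - 1) * SC := by rw [← hy]; positivity
          linarith
        gcongr

theorem zLo_lo {y : ℕ} {s : ℝ} {u v : V6} (hs : 1 < s) (hy : (y:ℝ) = (s - 1) * SC) (hu : Lo6 u s)
    (hv : Hi6 v s) : LoB (zLo y u v) (Zr s) := by
  have S0 := SC_pos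
  have y0' : (0:ℝ) < y := by rw [hy]; exact mul_pos (by linarith) S0
  have y0 : 0 < y := by exact_mod_cast y0'
  obtain ⟨h1, h2, h3, h4, h5, h6⟩ := hu
  have hs1 : 0 ≤ (SC + (s - 1) * SC : ℝ) := by
    have : 0 ≤ (s - 1) * SC := by rw [← hy]; positivity
    linarith
  unfold zLo
  simp only [frc_eq]
  have A2 := mLo_lo h1 h1
  have A4 := mLo_lo A2 A2
  have B2 := mHi_hi hv.1 hv.1 (by positivity)
  have B4 := mHi_hi B2 B2 (by positivity)
  have hle := le_Zr hs
  have e4 : ((2:ℝ) ^ (-s)) ^ 4 = (2:ℝ) ^ (-s) * (2:ℝ) ^ (-s) * ((2:ℝ) ^ (-s) * (2:ℝ) ^ (-s)) := by ring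
  rw [e4] at hle
  set q := (2:ℝ) ^ (-s) * (2:ℝ) ^ (-s) * ((2:ℝ) ^ (-s) * (2:ℝ) ^ (-s)) with hq
  have hz := zSum_lo h1 h2 h3 h4 h5 h6
  rw [← add_assoc, ← add_assoc] at hle
  refine LoB.sub (((hz.add (divLo y0 ?_)).add (divLo (by norm_num) ?_)).add
    (divLo (Nat.mul_pos (by norm_num) SC_pos') ?_)) (divHi ?_ ?_) hle (Zr_pos hs).le
  · unfold LoB at A4
    rw [hy]; push_cast
    have : s - 1 ≠ 0 := by linarith
    calc _ ≤ (q * SC) * (16 * SC) := by gcongr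
      _ = _ := by field_simp
  · unfold LoB at A4
    push_cast; linarith
  · unfold LoB at A4
    push_cast
    rw [hy]
    calc _ ≤ (SC + (s - 1) * SC) * (q * SC) := by gcongr
      _ = _ := by ring
  · exact Nat.mul_pos (by norm_num) (pow_pos SC_pos' _)
  · unfold HiB at B4
    push_cast
    rw [hy]
    calc s * (s + 1) * (s + 2) * (s + 19) * q / 47185920 * SC * (47185920 * SC ^ 4)
        = (SC + (s - 1) * SC) * (SC + (s - 1) * SC + SC) * (SC + (s - 1) * SC + 2 * SC)
          * (SC + (s - 1) * SC + 19 * SC) * (q * SC) := by ring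
      _ ≤ _ := by
        gcongr

theorem qle1 (p : ℝ) (hp : 1 ≤ p) {s : ℝ} (hs : 1 < s) : 0 ≤ 1 - p ^ (-s) := by
  have := rpow_le_one_of_one_le_of_nonpos hp (z := -s) (by linarith)
  linarith

noncomputable def pr (s : ℝ) : ℝ :=
  ((1 - (2:ℝ) ^ (-s)) * (1 - (3:ℝ) ^ (-s))) * ((1 - (5:ℝ) ^ (-s)) * (1 - (7:ℝ) ^ (-s)))
      * ((1 - (11:ℝ) ^ (-s)) * (1 - (13:ℝ) ^ (-s)))

theorem pr6_lo {v : V6} {s : ℝ} (hs : 1 < s) (hv : Hi6 v s) : LoB (pr6 mLo v) (pr s) := by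
  obtain ⟨h1, h2, h3, h4, h5, h6⟩ := hv
  have k1 := LoB.one.sub h1 le_rfl (qle1 2 (by norm_num) hs)
  have k2 := LoB.one.sub h2 le_rfl (qle1 3 (by norm_num) hs)
  have k3 := LoB.one.sub h3 le_rfl (qle1 5 (by norm_num) hs)
  have k4 := LoB.one.sub h4 le_rfl (qle1 7 (by norm_num) hs)
  have k5 := LoB.one.sub h5 le_rfl (qle1 11 (by norm_num) hs)
  have k6 := LoB.one.sub h6 le_rfl (qle1 13 (by norm_num) hs)
  exact mLo_lo (mLo_lo (mLo_lo k1 k2) (mLo_lo k3 k4)) (mLo_lo k5 k6)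

theorem pr6_hi {v : V6} {s : ℝ} (hs : 1 < s) (hv : Lo6 v s) : HiB (pr6 mHi v) (pr s) := by
  obtain ⟨h1, h2, h3, h4, h5, h6⟩ := hv
  have k1 := HiB.one.sub h1 le_rfl
  have k2 := HiB.one.sub h2 le_rfl
  have k3 := HiB.one.sub h3 le_rfl
  have k4 := HiB.one.sub h4 le_rfl
  have k5 := HiB.one.sub h5 le_rfl
  have k6 := HiB.one.sub h6 le_rfl
  have p2 := qle1 3 (by norm_num) hs
  have p3 := qle1 5 (by norm_num) hs
  have p4 := qle1 7 (by norm_num) hs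
  have p5 := qle1 11 (by norm_num) hs
  have p6 := qle1 13 (by norm_num) hs
  exact mHi_hi (mHi_hi (mHi_hi k1 k2 p2) (mHi_hi k3 k4 p4) (mul_nonneg p3 p4)) (mHi_hi k5 k6 p6)
    (mul_nonneg p5 p6)

theorem LF_eq' {s : ℝ} (hs : 1 < s) : LF s = log (Zr s * pr s) := by
  rw [LF_eq hs]; unfold pr; congr 1; ring

theorem qlt1 (p : ℝ) (hp : 1 < p) {s : ℝ} (hs : 1 < s) : 0 < 1 - p ^ (-s) := by
  have := rpow_lt_one_of_one_lt_of_neg hp (z := -s) (by linarith)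
  linarith

theorem one_le_Zp {s : ℝ} (hs : 1 < s) : 1 ≤ Zr s * pr s := by
  have h := LF_nonneg hs
  rw [LF_eq' hs] at h
  have hp : 0 < pr s := by
    have h1 := qlt1 2 (by norm_num) hs
    have h2 := qlt1 3 (by norm_num) hs
    have h3 := qlt1 5 (by norm_num) hs
    have h4 := qlt1 7 (by norm_num) hs
    have h5 := qlt1 11 (by norm_num) hs
    have h6 := qlt1 13 (by norm_num) hs
    unfold pr; positivity
  exact (log_nonneg_iff (mul_pos (Zr_pos hs) hp)).1 h

theorem LLo_lo {y : ℕ} {s : ℝ} {u v : V6} (hs : 1 < s) (hy : (y:ℝ) = (s - 1) * SC) (hu : Lo6 u s)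
    (hv : Hi6 v s) : LoB (LLo y u v) (LF s) := by
  rw [LF_eq' hs]
  unfold LLo
  rw [frc_eq]
  exact logLo_lo _ (mLo_lo (zLo_lo hs hy hu hv) (pr6_lo hs hv)) (one_le_Zp hs)

theorem LHi_hi {y : ℕ} {s : ℝ} {u v : V6} (hs : 1 < s) (hy : (y:ℝ) = (s - 1) * SC) (hu : Lo6 u s)
    (hv : Hi6 v s) : HiB (LHi y u v) (LF s) := by
  rw [LF_eq' hs]
  unfold LHi
  rw [frc_eq]
  have : 0 ≤ pr s := (pr6_lo hs hv).nonneg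
  exact logHi_hi _ (mHi_hi (zHi_hi hs hy hv) (pr6_hi hs hu) this) (one_le_Zp hs)

theorem qLo_lo {p x l : ℕ} {s : ℝ} (hp : 0 < p) (hx : (x:ℝ) = (s - 1) * SC)
    (hl : HiB l (log p)) : LoB (qLo p x l) ((p:ℝ) ^ (-s)) := by
  have hp' : (0:ℝ) < p := by exact_mod_cast hp
  have e : (p:ℝ) ^ (-s) = exp (-((s - 1) * log p)) / p := by
    rw [rpow_def_of_pos hp', show log p * (-s) = -((s - 1) * log p) - log p by ring, exp_sub, exp_log hp']
  have h1 : HiB (x * l / SC + 1) ((s - 1) * log p) := by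
    apply divHi SC_pos'
    unfold HiB at hl
    push_cast
    calc (s - 1) * log p * SC * SC = x * (log p * SC) := by rw [hx]; ring
      _ ≤ _ := by gcongr
  have h2 := eLo_lo _ h1
  rw [e]
  unfold qLo
  apply divLo hp
  unfold LoB at h2
  rw [show exp (-((s - 1) * log p)) / p * SC * p = exp (-((s - 1) * log p)) * SC by field_simp]
  exact h2

theorem qHi_hi {p x l : ℕ} {s : ℝ} (hp : 0 < p) (hx : (x:ℝ) = (s - 1) * SC)
    (hl : LoB l (log p)) : HiB (qHi p x l) ((p:ℝ) ^ (-s)) := by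
  have hp' : (0:ℝ) < p := by exact_mod_cast hp
  have e : (p:ℝ) ^ (-s) = exp (-((s - 1) * log p)) / p := by
    rw [rpow_def_of_pos hp', show log p * (-s) = -((s - 1) * log p) - log p by ring, exp_sub, exp_log hp']
  have h1 : LoB (x * l / SC) ((s - 1) * log p) := by
    apply divLo SC_pos'
    unfold LoB at hl
    push_cast
    calc (x:ℝ) * l ≤ x * (log p * SC) := by gcongr
      _ = _ := by rw [hx]; ring
  have h2 := eHi_hi _ h1
  rw [e]
  unfold qHi
  apply divHi hp
  unfold HiB at h2
  rw [show exp (-((s - 1) * log p)) / p * SC * p = exp (-((s - 1) * log p)) * SC by field_simp]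
  exact h2

theorem lp_ok : (Nat.ble lpLo.a (logLo (2 * SC)) && Nat.ble lpLo.b (logLo (3 * SC)) &&
    Nat.ble lpLo.c (logLo (5 * SC)) && Nat.ble lpLo.d (logLo (7 * SC)) &&
    Nat.ble lpLo.e (logLo (11 * SC)) && Nat.ble lpLo.f (logLo (13 * SC)) &&
    Nat.ble (logHi (2 * SC)) lpHi.a && Nat.ble (logHi (3 * SC)) lpHi.b &&
    Nat.ble (logHi (5 * SC)) lpHi.c && Nat.ble (logHi (7 * SC)) lpHi.d &&
    Nat.ble (logHi (11 * SC)) lpHi.e && Nat.ble (logHi (13 * SC)) lpHi.f) = true := by decide +kernel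

theorem lpLo_of {p l : ℕ} (hp : 1 ≤ p) (h : Nat.ble l (logLo (p * SC)) = true) : LoB l (log p) := by
  have := logLo_lo (p * SC) (r := p) (by unfold LoB; push_cast; exact le_rfl) (by exact_mod_cast hp)
  exact this.le (Nat.le_of_ble_eq_true h)

theorem lpHi_of {p l : ℕ} (hp : 1 ≤ p) (h : Nat.ble (logHi (p * SC)) l = true) : HiB l (log p) := by
  have := logHi_hi (p * SC) (r := p) (by unfold HiB; push_cast; exact le_rfl) (by exact_mod_cast hp)
  exact this.le (Nat.le_of_ble_eq_true h)

theorem qs_spec {x : ℕ} {s : ℝ} (hx : (x:ℝ) = (s - 1) * SC) :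
    ∃ u v, Lo6 u s ∧ Hi6 v s ∧ ∀ {α : Type} (k : V6 → V6 → α), qs x k = k u v := by
  have h := lp_ok
  rw [Bool.and_eq_true, Bool.and_eq_true, Bool.and_eq_true, Bool.and_eq_true, Bool.and_eq_true,
    Bool.and_eq_true, Bool.and_eq_true, Bool.and_eq_true, Bool.and_eq_true, Bool.and_eq_true,
    Bool.and_eq_true] at h
  obtain ⟨⟨⟨⟨⟨⟨⟨⟨⟨⟨⟨h1, h2⟩, h3⟩, h4⟩, h5⟩, h6⟩, g1⟩, g2⟩, g3⟩, g4⟩, g5⟩, g6⟩ := h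
  refine ⟨⟨qLo 2 x lpHi.a, qLo 3 x lpHi.b, qLo 5 x lpHi.c, qLo 7 x lpHi.d, qLo 11 x lpHi.e, qLo 13 x lpHi.f⟩,
    ⟨qHi 2 x lpLo.a, qHi 3 x lpLo.b, qHi 5 x lpLo.c, qHi 7 x lpLo.d, qHi 11 x lpLo.e, qHi 13 x lpLo.f⟩, ?_, ?_, fun k => by simp only [qs, frc_eq]⟩
  · exact ⟨qLo_lo (p := 2) (by norm_num) hx (lpHi_of (by norm_num) g1),
      qLo_lo (p := 3) (by norm_num) hx (lpHi_of (by norm_num) g2),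
      qLo_lo (p := 5) (by norm_num) hx (lpHi_of (by norm_num) g3),
      qLo_lo (p := 7) (by norm_num) hx (lpHi_of (by norm_num) g4),
      qLo_lo (p := 11) (by norm_num) hx (lpHi_of (by norm_num) g5),
      qLo_lo (p := 13) (by norm_num) hx (lpHi_of (by norm_num) g6)⟩
  · exact ⟨qHi_hi (p := 2) (by norm_num) hx (lpLo_of (by norm_num) h1),
      qHi_hi (p := 3) (by norm_num) hx (lpLo_of (by norm_num) h2),
      qHi_hi (p := 5) (by norm_num) hx (lpLo_of (by norm_num) h3),
      qHi_hi (p := 7) (by norm_num) hx (lpLo_of (by norm_num) h4),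
      qHi_hi (p := 11) (by norm_num) hx (lpLo_of (by norm_num) h5),
      qHi_hi (p := 13) (by norm_num) hx (lpLo_of (by norm_num) h6)⟩
theorem pz_nonneg (s : ℝ) : 0 ≤ primeZeta s := tsum_nonneg fun p => (q_pos p s).le

theorem sum6_lo {u : V6} {s : ℝ} (h : Lo6 u s) : LoB (sum6 u) ((2:ℝ) ^ (-s) + (3:ℝ) ^ (-s) +
    (5:ℝ) ^ (-s) + (7:ℝ) ^ (-s) + (11:ℝ) ^ (-s) + (13:ℝ) ^ (-s)) := by
  obtain ⟨h1, h2, h3, h4, h5, h6⟩ := h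
  exact ((((h1.add h2).add h3).add h4).add h5).add h6

theorem sum6_hi {u : V6} {s : ℝ} (h : Hi6 u s) : HiB (sum6 u) ((2:ℝ) ^ (-s) + (3:ℝ) ^ (-s) +
    (5:ℝ) ^ (-s) + (7:ℝ) ^ (-s) + (11:ℝ) ^ (-s) + (13:ℝ) ^ (-s)) := by
  obtain ⟨h1, h2, h3, h4, h5, h6⟩ := h
  exact ((((h1.add h2).add h3).add h4).add h5).add h6

theorem sc2 {x : ℕ} {s : ℝ} (hx : (x:ℝ) = (s - 1) * SC) : ((2 * x + SC : ℕ):ℝ) = (2 * s - 1) * SC := by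
  push_cast; rw [hx]; ring
theorem sc3 {x : ℕ} {s : ℝ} (hx : (x:ℝ) = (s - 1) * SC) :
    ((3 * x + 2 * SC : ℕ):ℝ) = (3 * s - 1) * SC := by
  push_cast; rw [hx]; ring
theorem sc4 {x : ℕ} {s : ℝ} (hx : (x:ℝ) = (s - 1) * SC) :
    ((4 * x + 3 * SC : ℕ):ℝ) = (2 * (2 * s) - 1) * SC := by
  push_cast; rw [hx]; ring

theorem nodeLo_spec {x : ℕ} {s : ℝ} (hs : 1 < s) (hx : (x:ℝ) = (s - 1) * SC) :
    ∃ A B, LoB A (primeZeta s) ∧ LoB B (primeZeta (2 * s)) ∧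
      ∀ {α : Type} (k : ℕ → ℕ → α), nodeLo x k = k A B := by
  obtain ⟨u, v, hu, hv, e1⟩ := qs_spec hx
  obtain ⟨u2, hu2, e2⟩ := mul6_lo hu hu (r := 2 * s) (by ring)
  obtain ⟨v2, hv2, e3⟩ := mul6_hi hv hv (r := 2 * s) (by ring)
  obtain ⟨u3, hu3, e4⟩ := mul6_lo hu2 hu (r := 3 * s) (by ring)
  obtain ⟨v3, hv3, e5⟩ := mul6_hi hv2 hv (r := 3 * s) (by ring)
  obtain ⟨u4, hu4, e6⟩ := mul6_lo hu2 hu2 (r := 2 * (2 * s)) (by ring)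
  obtain ⟨v4, hv4, e7⟩ := mul6_hi hv2 hv2 (r := 2 * (2 * s)) (by ring)
  refine ⟨sum6 u + LLo x u v - (LHi (2 * x + SC) u2 v2 / 2 + LHi (3 * x + 2 * SC) u3 v3 * 290 / 867 + 2),
    sum6 u2 + LLo (2 * x + SC) u2 v2 - (LHi (4 * x + 3 * SC) u4 v4 * 145 / 289 + 1), ?_, ?_,
    fun k => by simp only [nodeLo, e1, e2, e3, e4, e5, e6, e7, frc_eq]⟩
  · have k1 := LLo_lo hs hx hu hv
    have k2 := LHi_hi (s := 2 * s) (by linarith) (sc2 hx) hu2 hv2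
    have k3 := LHi_hi (s := 3 * s) (by linarith) (sc3 hx) hu3 hv3
    have j2 : HiB (LHi (2 * x + SC) u2 v2 / 2 + 1) (LF (2 * s) / 2) := by
      apply divHi (by norm_num)
      unfold HiB at k2
      push_cast; linarith
    have j3 : HiB (LHi (3 * x + 2 * SC) u3 v3 * 290 / 867 + 1) (LF (3 * s) * (290 / 867)) := by
      apply divHi (by norm_num)
      unfold HiB at k3
      push_cast; linarith
    have j4 := (j2.add j3).le (n := LHi (2 * x + SC) u2 v2 / 2 + LHi (3 * x + 2 * SC) u3 v3 * 290 / 867 + 2)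
      (by omega)
    refine ((sum6_lo hu).add k1).sub j4 ?_ (pz_nonneg s)
    rw [pz_split hs]
    have := le_TF hs
    linarith
  · have k2 := LLo_lo (s := 2 * s) (by linarith) (sc2 hx) hu2 hv2
    have k4 := LHi_hi (s := 2 * (2 * s)) (by linarith) (sc4 hx) hu4 hv4
    have j4 : HiB (LHi (4 * x + 3 * SC) u4 v4 * 145 / 289 + 1) (LF (2 * (2 * s)) * (145 / 289)) := by
      apply divHi (by norm_num)
      unfold HiB at k4
      push_cast; linarith
    refine ((sum6_lo hu2).add k2).sub j4 ?_ (pz_nonneg _)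
    rw [pz_split (s := 2 * s) (by linarith)]
    have := le_TF2 (s := 2 * s) (by linarith)
    linarith

theorem nodeHi_spec {x : ℕ} {s : ℝ} (hs : 1 < s) (hx : (x:ℝ) = (s - 1) * SC) :
    ∃ A B, HiB A (primeZeta s) ∧ HiB B (primeZeta (2 * s)) ∧
      ∀ {α : Type} (k : ℕ → ℕ → α), nodeHi x k = k A B := by
  obtain ⟨u, v, hu, hv, e1⟩ := qs_spec hx
  obtain ⟨u2, hu2, e2⟩ := mul6_lo hu hu (r := 2 * s) (by ring)
  obtain ⟨v2, hv2, e3⟩ := mul6_hi hv hv (r := 2 * s) (by ring)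
  obtain ⟨u3, hu3, e4⟩ := mul6_lo hu2 hu (r := 3 * s) (by ring)
  obtain ⟨v3, hv3, e5⟩ := mul6_hi hv2 hv (r := 3 * s) (by ring)
  obtain ⟨u4, hu4, e6⟩ := mul6_lo hu2 hu2 (r := 2 * (2 * s)) (by ring)
  obtain ⟨v4, hv4, e7⟩ := mul6_hi hv2 hv2 (r := 2 * (2 * s)) (by ring)
  refine ⟨sum6 v + LHi x u v - (LLo (2 * x + SC) u2 v2 / 2 + LLo (3 * x + 2 * SC) u3 v3 / 3),
    sum6 v2 + LHi (2 * x + SC) u2 v2 - LLo (4 * x + 3 * SC) u4 v4 / 2, ?_, ?_,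
    fun k => by simp only [nodeHi, e1, e2, e3, e4, e5, e6, e7, frc_eq]⟩
  · have k1 := LHi_hi hs hx hu hv
    have k2 := LLo_lo (s := 2 * s) (by linarith) (sc2 hx) hu2 hv2
    have k3 := LLo_lo (s := 3 * s) (by linarith) (sc3 hx) hu3 hv3
    have j2 : LoB (LLo (2 * x + SC) u2 v2 / 2) (LF (2 * s) / 2) := by
      apply divLo (by norm_num)
      unfold LoB at k2
      push_cast; linarith
    have j3 : LoB (LLo (3 * x + 2 * SC) u3 v3 / 3) (LF (3 * s) / 3) := by
      apply divLo (by norm_num)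
      unfold LoB at k3
      push_cast; linarith
    refine ((sum6_hi hv).add k1).sub (j2.add j3) ?_
    rw [pz_split hs]
    have := TF_le hs
    linarith
  · have k2 := LHi_hi (s := 2 * s) (by linarith) (sc2 hx) hu2 hv2
    have k4 := LLo_lo (s := 2 * (2 * s)) (by linarith) (sc4 hx) hu4 hv4
    have j4 : LoB (LLo (4 * x + 3 * SC) u4 v4 / 2) (LF (2 * (2 * s)) / 2) := by
      apply divLo (by norm_num)
      unfold LoB at k4
      push_cast; linarith
    refine ((sum6_hi hv2).add k2).sub j4 ?_
    rw [pz_split (s := 2 * s) (by linarith)]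
    have := TF_le2 (s := 2 * s) (by linarith)
    linarith

/-- the two integrands -/
noncomputable def EA (t s : ℝ) : ℝ := primeZeta s * exp ((1 - s) * t)
noncomputable def EB (t s : ℝ) : ℝ := (primeZeta s ^ 2 + primeZeta (2 * s)) / 2 * exp ((1 - s) * t)

theorem ex_lo {x : ℕ} {s : ℝ} (hx : (x:ℝ) = (s - 1) * SC) (n : ℕ) :
    LoB (eLo (x * n / 1000 + 1)) (exp ((1 - s) * (n / 1000))) := by
  rw [show (1 - s) * ((n:ℝ) / 1000) = -((s - 1) * (n / 1000)) by ring]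
  apply eLo_lo
  apply divHi (by norm_num)
  push_cast
  rw [hx]
  apply le_of_eq; ring

theorem ex_hi {x : ℕ} {s : ℝ} (hx : (x:ℝ) = (s - 1) * SC) (n : ℕ) :
    HiB (eHi (x * n / 1000)) (exp ((1 - s) * (n / 1000))) := by
  rw [show (1 - s) * ((n:ℝ) / 1000) = -((s - 1) * (n / 1000)) by ring]
  apply eHi_hi
  apply divLo (by norm_num)
  push_cast
  rw [hx]
  apply le_of_eq; ring

theorem fLo_spec {x : ℕ} {s : ℝ} (hs : 1 < s) (hx : (x:ℝ) = (s - 1) * SC) :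
    ∃ A B, LoB A (EA (1044 / 1000) s) ∧ LoB B (EB (1045 / 1000) s) ∧
      ∀ {α : Type} (k : ℕ → ℕ → α), fLo x k = k A B := by
  obtain ⟨P, Q, hP, hQ, e⟩ := nodeLo_spec hs hx
  refine ⟨mLo P (eLo (x * 1044 / 1000 + 1)), mLo ((mLo P P + Q) / 2) (eLo (x * 1045 / 1000 + 1)), ?_, ?_,
    fun k => by simp only [fLo, e, frc_eq]⟩
  · exact mLo_lo hP (by simpa using ex_lo hx 1044)
  · refine mLo_lo ?_ (by simpa using ex_lo hx 1045)
    have h1 := (mLo_lo hP hP).add hQ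
    apply divLo (by norm_num)
    unfold LoB at h1
    rw [sq]
    push_cast at h1 ⊢
    linarith

theorem fHi_spec {x : ℕ} {s : ℝ} (hs : 1 < s) (hx : (x:ℝ) = (s - 1) * SC) :
    ∃ A B, HiB A (EA (1045 / 1000) s) ∧ HiB B (EB (1044 / 1000) s) ∧
      ∀ {α : Type} (k : ℕ → ℕ → α), fHi x k = k A B := by
  obtain ⟨P, Q, hP, hQ, e⟩ := nodeHi_spec hs hx
  refine ⟨mHi P (eHi (x * 1045 / 1000)), mHi ((mHi P P + Q) / 2 + 1) (eHi (x * 1044 / 1000)), ?_, ?_,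
    fun k => by simp only [fHi, e, frc_eq]⟩
  · exact mHi_hi hP (by simpa using ex_hi hx 1045) (exp_pos _).le
  · refine mHi_hi ?_ (by simpa using ex_hi hx 1044) (exp_pos _).le
    have h1 := (mHi_hi hP hP (pz_nonneg s)).add hQ
    apply divHi (by norm_num)
    unfold HiB at h1
    rw [sq]
    push_cast at h1 ⊢
    linarith
theorem hasSum_cg {ι : Type} {f g : ι → ℝ} {a : ℝ} (h : ∀ i, f i = g i) : HasSum f a ↔ HasSum g a := by
  rw [funext h]

theorem pow35 (k : ℕ) : (3/5:ℝ) ^ (k+1) * (2 * (k + 1) + 1) ≤ 9 / 5 := by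
  induction k with
  | zero => norm_num
  | succ k ih =>
    have h : (0:ℝ) ≤ (3/5:ℝ) ^ (k+1) := by positivity
    have hk : (0:ℝ) ≤ k := Nat.cast_nonneg k
    push_cast
    rw [pow_succ]
    nlinarith [mul_nonneg h hk]

theorem gauss_ineq {y z : ℝ} (hy : 0 ≤ y) (hz : z ^ 2 ≤ 3 / 5 * y ^ 2) :
    y * (8 + 10 * cosh z) ≤ 18 * sinh y := by
  have h1 := (Real.hasSum_sinh y).mul_left 18
  have h2 := ((hasSum_ite_eq (0:ℕ) (8 * y)).add ((Real.hasSum_cosh z).mul_left (10 * y)))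
  have := hasSum_le (fun k => ?_) h2 h1
  · linarith
  · rcases k with _ | k
    · simp; linarith
    · simp only [Nat.add_eq_zero_iff, one_ne_zero, and_false, if_false, zero_add]
      have e : ((2 * (k + 1) + 1).factorial : ℝ) = (2 * (k + 1) + 1) * ((2 * (k + 1)).factorial : ℝ) := by
        rw [Nat.factorial_succ]; push_cast; ring
      have f0 : (0:ℝ) < ((2 * (k + 1)).factorial : ℝ) := by exact_mod_cast Nat.factorial_pos _
      rw [e, mul_div_assoc', mul_div_assoc', div_le_div_iff₀ f0 (by positivity)]
      have g1 : z ^ (2 * (k + 1)) ≤ (3/5) ^ (k+1) * y ^ (2 * (k + 1)) := by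
        rw [pow_mul, pow_mul, ← mul_pow]
        gcongr
      have g2 := pow35 k
      have hp : 0 ≤ y ^ (2 * (k + 1)) := by positivity
      calc 10 * y * z ^ (2 * (k + 1)) * ((2 * (k + 1) + 1) * ((2 * (k + 1)).factorial : ℝ))
          ≤ 10 * y * ((3/5) ^ (k+1) * y ^ (2 * (k + 1))) * ((2 * (k + 1) + 1) * ((2 * (k + 1)).factorial : ℝ)) := by
            gcongr
        _ = 10 * (y * y ^ (2 * (k + 1)) * ((2 * (k + 1)).factorial : ℝ)) * ((3/5) ^ (k+1) * (2 * (k + 1) + 1)) := by ring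
        _ ≤ 10 * (y * y ^ (2 * (k + 1)) * ((2 * (k + 1)).factorial : ℝ)) * (9 / 5) := by gcongr
        _ = _ := by rw [pow_succ y (2 * (k + 1))]; ring

theorem pow4 (k : ℕ) (h1 : 1 ≤ k) : 180 ≤ (28 + 128 * (1/4:ℝ) ^ k) * (2 * k + 1) := by
  rcases Nat.lt_or_ge k 3 with h | h
  · interval_cases k <;> norm_num
  · have h' : (3:ℝ) ≤ k := by exact_mod_cast h
    have : 0 ≤ (1/4:ℝ) ^ k := by positivity
    nlinarith

theorem boole_ineq {y : ℝ} (hy : 0 ≤ y) :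
    180 * sinh y ≤ y * (28 * cosh y + 128 * cosh (y / 2) + 24) := by
  have h1 := (Real.hasSum_sinh y).mul_left 180
  have h2 := ((hasSum_ite_eq (0:ℕ) (24 * y)).add (((Real.hasSum_cosh y).mul_left (28 * y)).add
    ((Real.hasSum_cosh (y / 2)).mul_left (128 * y))))
  have := hasSum_le (fun k => ?_) h1 h2
  · linarith
  · rcases k with _ | k
    · simp; linarith
    · simp only [Nat.add_eq_zero_iff, one_ne_zero, and_false, if_false, zero_add]
      have e : ((2 * (k + 1) + 1).factorial : ℝ) = (2 * (k + 1) + 1) * ((2 * (k + 1)).factorial : ℝ) := by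
        rw [Nat.factorial_succ]; push_cast; ring
      have f0 : (0:ℝ) < ((2 * (k + 1)).factorial : ℝ) := by exact_mod_cast Nat.factorial_pos _
      have e2 : (y / 2) ^ (2 * (k + 1)) = (1/4) ^ (k+1) * y ^ (2 * (k + 1)) := by
        rw [pow_mul, pow_mul, ← mul_pow]; congr 1; ring
      rw [e, mul_div_assoc', mul_div_assoc', mul_div_assoc', ← add_div,
        div_le_div_iff₀ (by positivity) f0, e2]
      have g := pow4 (k + 1) (by omega)
      push_cast at g
      have hp : 0 ≤ y * y ^ (2 * (k + 1)) * ((2 * (k + 1)).factorial : ℝ) := by positivity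
      calc _ = 180 * (y * y ^ (2 * (k + 1)) * ((2 * (k + 1)).factorial : ℝ)) := by
            rw [pow_succ y (2 * (k + 1))]; ring
        _ ≤ ((28 + 128 * (1/4:ℝ) ^ (k + 1)) * (2 * (k + 1) + 1)) * (y * y ^ (2 * (k + 1)) * ((2 * (k + 1)).factorial : ℝ)) := by
            gcongr
        _ = _ := by ring

theorem int_exp {l : ℝ} (hl : 0 < l) (m h : ℝ) :
    ∫ s in (m - h)..(m + h), exp (-(l * s)) = 2 * exp (-(l * m)) * sinh (l * h) / l := by
  have hd : ∀ s ∈ Set.uIcc (m - h) (m + h), HasDerivAt (fun s => - exp (-(l * s)) / l) (exp (-(l * s))) s := by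
    intro s _
    have := (((hasDerivAt_id s).const_mul l).neg.exp.neg).div_const l
    refine this.congr_deriv ?_
    simp only [id, mul_one]
    field_simp
    rfl
  rw [intervalIntegral.integral_eq_sub_of_hasDerivAt hd (by apply Continuous.intervalIntegrable; fun_prop)]
  rw [sinh_eq, show -(l * (m + h)) = -(l * m) + -(l * h) by ring,
    show -(l * (m - h)) = -(l * m) + (l * h) by ring, exp_add, exp_add]
  field_simp
  ring

theorem gauss_exp {l : ℝ} (hl : 0 < l) {m h d : ℝ} (hh : 0 ≤ h) (hd : d ^ 2 ≤ 3 / 5 * h ^ 2) :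
    h / 9 * (5 * exp (-(l * (m - d))) + 8 * exp (-(l * m)) + 5 * exp (-(l * (m + d)))) ≤
      ∫ s in (m - h)..(m + h), exp (-(l * s)) := by
  rw [int_exp hl, le_div_iff₀ hl]
  have := gauss_ineq (y := l * h) (z := l * d) (by positivity) (by
    rw [mul_pow, mul_pow]; nlinarith [sq_nonneg l])
  rw [cosh_eq] at this
  rw [show -(l * (m + d)) = -(l * m) + -(l * d) by ring,
    show -(l * (m - d)) = -(l * m) + (l * d) by ring, exp_add, exp_add]
  have e0 := exp_pos (-(l * m))
  nlinarith [mul_le_mul_of_nonneg_left this e0.le]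

theorem boole_exp {l : ℝ} (hl : 0 < l) {a g : ℝ} (hg : 0 ≤ g) :
    ∫ s in a..(a + 4 * g), exp (-(l * s)) ≤
    g / 45 * (14 * exp (-(l * a)) + 64 * exp (-(l * (a + g))) + 24 * exp (-(l * (a + 2 * g)))
      + 64 * exp (-(l * (a + 3 * g))) + 14 * exp (-(l * (a + 4 * g)))) := by
  have := int_exp hl (a + 2 * g) (2 * g)
  rw [show a + 2 * g - 2 * g = a by ring, show a + 2 * g + 2 * g = a + 4 * g by ring] at this
  rw [this, div_le_iff₀ hl]
  have := boole_ineq (y := l * (2 * g)) (by positivity)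
  rw [cosh_eq, cosh_eq, show l * (2 * g) / 2 = l * g by ring] at this
  rw [show -(l * a) = -(l * (a + 2 * g)) + l * (2 * g) by ring,
    show -(l * (a + g)) = -(l * (a + 2 * g)) + l * g by ring,
    show -(l * (a + 3 * g)) = -(l * (a + 2 * g)) + -(l * g) by ring,
    show -(l * (a + 4 * g)) = -(l * (a + 2 * g)) + -(l * (2 * g)) by ring,
    exp_add, exp_add, exp_add, exp_add]
  have e0 := exp_pos (-(l * (a + 2 * g)))
  nlinarith [mul_le_mul_of_nonneg_left this e0.le]

/-- positive sums of exponentials -/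
def XS (F : ℝ → ℝ) : Prop := ∃ (ι : Type) (_ : Countable ι) (c l : ι → ℝ), (∀ i, 0 ≤ c i) ∧ (∀ i, 0 < l i) ∧
  ∀ s, 1 < s → HasSum (fun i => c i * exp (-(l i * s))) (F s)

theorem XS.add {F G : ℝ → ℝ} (hF : XS F) (hG : XS G) : XS (fun s => F s + G s) := by
  obtain ⟨ι, _, c, l, hc, hl, h⟩ := hF
  obtain ⟨κ, _, d, m, hd, hm, k⟩ := hG
  refine ⟨ι ⊕ κ, inferInstance, Sum.elim c d, Sum.elim l m, ?_, ?_, fun s hs => ?_⟩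
  · rintro (i | i) <;> simp [hc, hd]
  · rintro (i | i) <;> simp [hl, hm]
  · exact HasSum.sum (h s hs) (k s hs)

theorem XS.mul {F G : ℝ → ℝ} (hF : XS F) (hG : XS G) : XS (fun s => F s * G s) := by
  obtain ⟨ι, _, c, l, hc, hl, h⟩ := hF
  obtain ⟨κ, _, d, m, hd, hm, k⟩ := hG
  refine ⟨ι × κ, inferInstance, fun i => c i.1 * d i.2, fun i => l i.1 + m i.2,
    fun i => mul_nonneg (hc _) (hd _), fun i => add_pos (hl _) (hm _), fun s hs => ?_⟩
  have := (h s hs).mul (k s hs) ((h s hs).summable.mul_of_nonneg (k s hs).summable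
    (fun i => mul_nonneg (hc _) (exp_pos _).le) (fun i => mul_nonneg (hd _) (exp_pos _).le))
  refine (hasSum_cg fun i => ?_).2 this
  rw [show -((l i.1 + m i.2) * s) = -(l i.1 * s) + -(m i.2 * s) by ring, exp_add]
  ring

theorem XS.const_mul {F : ℝ → ℝ} (hF : XS F) {a : ℝ} (ha : 0 ≤ a) : XS (fun s => a * F s) := by
  obtain ⟨ι, hi, c, l, hc, hl, h⟩ := hF
  refine ⟨ι, hi, fun i => a * c i, l, fun i => mul_nonneg ha (hc i), hl, fun s hs => ?_⟩
  simpa only [mul_assoc] using (h s hs).mul_left a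

theorem XS.exp_mul {F : ℝ → ℝ} (hF : XS F) {t : ℝ} (ht : 0 ≤ t) : XS (fun s => F s * exp ((1 - s) * t)) := by
  obtain ⟨ι, hi, c, l, hc, hl, h⟩ := hF
  refine ⟨ι, hi, fun i => c i * exp t, fun i => l i + t, fun i => mul_nonneg (hc i) (exp_pos _).le,
    fun i => add_pos_of_pos_of_nonneg (hl i) ht, fun s hs => ?_⟩
  refine (hasSum_cg fun i => ?_).2 ((h s hs).mul_right (exp ((1 - s) * t)))
  rw [mul_assoc, mul_assoc, ← exp_add, ← exp_add]
  congr 2; ring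

theorem XS.pz : XS primeZeta := by
  refine ⟨Nat.Primes, inferInstance, fun _ => 1, fun p => log p.1, fun _ => zero_le_one,
    fun p => log_pos (by linarith [prime_two_le p]), fun s hs => ?_⟩
  refine (hasSum_cg fun p => ?_).2 (pz_summable hs).hasSum
  rw [one_mul, rpow_def_of_pos (prime_pos p)]
  congr 1; ring

theorem XS.pz2 : XS (fun s => primeZeta (2 * s)) := by
  refine ⟨Nat.Primes, inferInstance, fun _ => 1, fun p => 2 * log p.1, fun _ => zero_le_one,
    fun p => mul_pos two_pos (log_pos (by linarith [prime_two_le p])), fun s hs => ?_⟩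
  refine (hasSum_cg fun p => ?_).2 (pz_summable (s := 2 * s) (by linarith)).hasSum
  rw [one_mul, rpow_def_of_pos (prime_pos p)]
  congr 1; ring

theorem XS.EA {t : ℝ} (ht : 0 ≤ t) : XS (EA t) := XS.pz.exp_mul ht

theorem XS.P2 : XS (fun s => (primeZeta s ^ 2 + primeZeta (2 * s)) / 2) := by
  convert ((XS.pz.mul XS.pz).add XS.pz2).const_mul (a := 1 / 2) (by norm_num) using 2
  ring

theorem XS.EB {t : ℝ} (ht : 0 ≤ t) : XS (EB t) := XS.P2.exp_mul ht

theorem XS.nonneg {F : ℝ → ℝ} (hF : XS F) {s : ℝ} (hs : 1 < s) : 0 ≤ F s := by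
  obtain ⟨ι, _, c, l, hc, hl, h⟩ := hF
  exact (h s hs).nonneg fun i => mul_nonneg (hc i) (exp_pos _).le

theorem XS.anti {F : ℝ → ℝ} (hF : XS F) : AntitoneOn F (Set.Ioi 1) := by
  obtain ⟨ι, _, c, l, hc, hl, h⟩ := hF
  intro s hs r hr hsr
  refine hasSum_le (fun i => ?_) (h r hr) (h s hs)
  have := hc i
  have := (hl i).le
  gcongr

theorem XS.ii {F : ℝ → ℝ} (hF : XS F) {a b : ℝ} (ha : 1 < a) (hb : 1 < b) :
    IntervalIntegrable F volume a b := by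
  apply AntitoneOn.intervalIntegrable
  apply hF.anti.mono
  intro x hx
  exact lt_of_lt_of_le (lt_min ha hb) hx.1

theorem XS_int {ι : Type} [Countable ι] {c l : ι → ℝ} {F : ℝ → ℝ} (hc : ∀ i, 0 ≤ c i) (hl : ∀ i, 0 < l i)
    (h : ∀ s, 1 < s → HasSum (fun i => c i * exp (-(l i * s))) (F s)) {a b : ℝ} (ha : 1 < a) (hb : a ≤ b) :
    HasSum (fun i => c i * ∫ s in a..b, exp (-(l i * s))) (∫ s in a..b, F s) := by
  have := intervalIntegral.hasSum_integral_of_dominated_convergence (μ := volume) (a := a) (b := b)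
    (F := fun i s => c i * exp (-(l i * s))) (f := F) (fun i _ => c i * exp (-(l i * a)))
    (fun i => by apply Continuous.aestronglyMeasurable; fun_prop)
    (fun i => Filter.Eventually.of_forall fun t ht => by
      rw [Set.uIoc_of_le hb] at ht
      have := hc i
      have := (hl i).le
      rw [norm_of_nonneg (by positivity)]
      have := ht.1.le
      gcongr)
    (Filter.Eventually.of_forall fun t _ => (h a ha).summable)
    (by simp)
    (Filter.Eventually.of_forall fun t ht => by
      rw [Set.uIoc_of_le hb] at ht
      exact h t (ha.trans ht.1))
  simpa only [intervalIntegral.integral_const_mul] using this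

theorem XS.gauss {F : ℝ → ℝ} (hF : XS F) {m h d : ℝ} (hh : 0 ≤ h) (hd0 : 0 ≤ d)
    (hd : d ^ 2 ≤ 3 / 5 * h ^ 2) (h1 : 1 < m - h) :
    h / 9 * (5 * F (m - d) + 8 * F m + 5 * F (m + d)) ≤ ∫ s in (m - h)..(m + h), F s := by
  obtain ⟨ι, _, c, l, hc, hl, H⟩ := hF
  have dh : d ≤ h := by nlinarith
  have s1 := H (m - d) (by linarith)
  have s2 := H m (by linarith)
  have s3 := H (m + d) (by linarith)
  have := (((s1.mul_left 5).add (s2.mul_left 8)).add (s3.mul_left 5)).mul_left (h / 9)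
  refine hasSum_le (fun i => ?_) this (XS_int hc hl H h1 (by linarith))
  have := mul_le_mul_of_nonneg_left (gauss_exp (hl i) (m := m) hh hd) (hc i)
  refine le_trans (le_of_eq ?_) this
  ring

theorem XS.boole {F : ℝ → ℝ} (hF : XS F) {a g : ℝ} (hg : 0 ≤ g) (h1 : 1 < a) :
    ∫ s in a..(a + 4 * g), F s ≤ g / 45 * (14 * F a + 64 * F (a + g) + 24 * F (a + 2 * g)
      + 64 * F (a + 3 * g) + 14 * F (a + 4 * g)) := by
  obtain ⟨ι, _, c, l, hc, hl, H⟩ := hF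
  have s0 := H a h1
  have s1 := H (a + g) (by linarith)
  have s2 := H (a + 2 * g) (by linarith)
  have s3 := H (a + 3 * g) (by linarith)
  have s4 := H (a + 4 * g) (by linarith)
  have := (((((s0.mul_left 14).add (s1.mul_left 64)).add (s2.mul_left 24)).add (s3.mul_left 64)).add
    (s4.mul_left 14)).mul_left (g / 45)
  refine hasSum_le (fun i => ?_) (XS_int hc hl H h1 (by linarith)) this
  have := mul_le_mul_of_nonneg_left (boole_exp (hl i) (a := a) hg) (hc i)
  refine le_trans this (le_of_eq ?_)
  ring

noncomputable def sv (x : ℕ) : ℝ := 1 + (x:ℝ) / SC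

theorem sv_eq (x : ℕ) : (x:ℝ) = (sv x - 1) * SC := by
  have := SC_pos
  unfold sv; field_simp; ring

theorem sv_lt {x : ℕ} (hx : 0 < x) : 1 < sv x := by
  have := SC_pos
  have h : (0:ℝ) < x := by exact_mod_cast hx
  have : 0 < (x:ℝ) / SC := by positivity
  unfold sv; linarith

theorem sv_add (x y : ℕ) : sv (x + y) = sv x + (y:ℝ) / SC := by
  unfold sv; push_cast; ring

theorem gauss_spec {a : ℕ} (g : ℕ) (ha : 0 < a) :
    ∃ A B, LoB A (∫ s in sv a..sv (a + 4 * g), EA (1044 / 1000) s) ∧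
      LoB B (∫ s in sv a..sv (a + 4 * g), EB (1045 / 1000) s) ∧
      ∀ {α : Type} (k : ℕ → ℕ → α), gauss a g k = k A B := by
  have S0 := SC_pos
  obtain ⟨m, hm⟩ : ∃ m, m = a + 2 * g := ⟨_, rfl⟩
  obtain ⟨d, hd⟩ : ∃ d, d = 2 * g * 812223 / 1048576 := ⟨_, rfl⟩
  have dle : d ≤ 2 * g := by omega
  have hdr : (d:ℝ) ≤ 2 * g * (812223 / 1048576) := by
    rw [hd]
    refine (div_le_r _ _).trans (le_of_eq ?_)
    push_cast; ring
  obtain ⟨A1, B1, a1, b1, e1⟩ := fLo_spec (sv_lt (x := m - d) (by omega)) (sv_eq _)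
  obtain ⟨A2, B2, a2, b2, e2⟩ := fLo_spec (sv_lt (x := m) (by omega)) (sv_eq _)
  obtain ⟨A3, B3, a3, b3, e3⟩ := fLo_spec (sv_lt (x := m + d) (by omega)) (sv_eq _)
  have q1 : sv (m - d) = sv m - (d:ℝ) / SC := by
    have := sv_add (m - d) d
    rw [Nat.sub_add_cancel (by omega)] at this
    linarith
  have q3 := sv_add m d
  have l1 : sv a = sv m - (2 * g : ℝ) / SC := by
    rw [hm, sv_add]; push_cast; ring
  have l2 : sv (a + 4 * g) = sv m + (2 * g : ℝ) / SC := by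
    rw [hm, sv_add, sv_add]; push_cast; ring
  have hsq : ((d:ℝ) / SC) ^ 2 ≤ 3 / 5 * ((2 * g : ℝ) / SC) ^ 2 := by
    rw [div_pow, div_pow, mul_div_assoc']
    gcongr
    have : (d:ℝ) ^ 2 ≤ (2 * g * (812223 / 1048576)) ^ 2 := by gcongr
    nlinarith [sq_nonneg (g:ℝ)]
  have hl := sv_lt ha
  have key : ∀ {F : ℝ → ℝ} {X1 X2 X3 : ℕ}, XS F → LoB X1 (F (sv (m - d))) → LoB X2 (F (sv m)) →
      LoB X3 (F (sv (m + d))) →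
      LoB (2 * g * (5 * X1 + 8 * X2 + 5 * X3) / (9 * SC)) (∫ s in sv a..sv (a + 4 * g), F s) := by
    intro F X1 X2 X3 hF h1 h2 h3
    have := hF.gauss (m := sv m) (h := (2 * g : ℝ) / SC) (d := (d:ℝ) / SC) (by positivity) (by positivity)
      hsq (by rw [← l1]; exact hl)
    rw [← l1, ← l2, ← q1, ← q3] at this
    refine LoB.mono ?_ this
    apply divLo (Nat.mul_pos (by norm_num) SC_pos')
    unfold LoB at h1 h2 h3
    push_cast
    calc (2 * g * (5 * X1 + 8 * X2 + 5 * X3) : ℝ) ≤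
          2 * g * (5 * (F (sv (m - d)) * SC) + 8 * (F (sv m) * SC) + 5 * (F (sv (m + d)) * SC)) := by gcongr
      _ = _ := by field_simp
  refine ⟨2 * g * (5 * A1 + 8 * A2 + 5 * A3) / (9 * SC), 2 * g * (5 * B1 + 8 * B2 + 5 * B3) / (9 * SC),
    key (XS.EA (by norm_num)) a1 a2 a3, key (XS.EB (by norm_num)) b1 b2 b3, fun k => ?_⟩
  simp only [gauss, frc_eq, ← hm, ← hd, e1, e2, e3]

theorem boole_spec {a : ℕ} (g : ℕ) (ha : 0 < a) :
    ∃ A B, HiB A (∫ s in sv a..sv (a + 4 * g), EA (1045 / 1000) s) ∧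
      HiB B (∫ s in sv a..sv (a + 4 * g), EB (1044 / 1000) s) ∧
      ∀ {α : Type} (k : ℕ → ℕ → α), boole a g k = k A B := by
  have S0 := SC_pos
  obtain ⟨A0, B0, a0, b0, e0⟩ := fHi_spec (sv_lt ha) (sv_eq _)
  obtain ⟨A1, B1, a1, b1, e1⟩ := fHi_spec (sv_lt (x := a + g) (by omega)) (sv_eq _)
  obtain ⟨A2, B2, a2, b2, e2⟩ := fHi_spec (sv_lt (x := a + 2 * g) (by omega)) (sv_eq _)
  obtain ⟨A3, B3, a3, b3, e3⟩ := fHi_spec (sv_lt (x := a + 3 * g) (by omega)) (sv_eq _)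
  obtain ⟨A4, B4, a4, b4, e4⟩ := fHi_spec (sv_lt (x := a + 4 * g) (by omega)) (sv_eq _)
  have q1 : sv (a + g) = sv a + (g:ℝ) / SC := sv_add _ _
  have q2 : sv (a + 2 * g) = sv a + 2 * ((g:ℝ) / SC) := by rw [sv_add]; push_cast; ring
  have q3 : sv (a + 3 * g) = sv a + 3 * ((g:ℝ) / SC) := by rw [sv_add]; push_cast; ring
  have q4 : sv (a + 4 * g) = sv a + 4 * ((g:ℝ) / SC) := by rw [sv_add]; push_cast; ring
  have key : ∀ {F : ℝ → ℝ} {X0 X1 X2 X3 X4 : ℕ}, XS F → HiB X0 (F (sv a)) → HiB X1 (F (sv (a + g))) →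
      HiB X2 (F (sv (a + 2 * g))) → HiB X3 (F (sv (a + 3 * g))) → HiB X4 (F (sv (a + 4 * g))) →
      HiB (g * (14 * X0 + 64 * X1 + 24 * X2 + 64 * X3 + 14 * X4) / (45 * SC) + 1)
        (∫ s in sv a..sv (a + 4 * g), F s) := by
    intro F X0 X1 X2 X3 X4 hF h0 h1 h2 h3 h4
    have := hF.boole (a := sv a) (g := (g:ℝ) / SC) (by positivity) (sv_lt ha)
    rw [← q1, ← q2, ← q3, ← q4] at this
    refine HiB.mono ?_ this
    apply divHi (Nat.mul_pos (by norm_num) SC_pos')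
    unfold HiB at h0 h1 h2 h3 h4
    push_cast
    calc _ = g * (14 * (F (sv a) * SC) + 64 * (F (sv (a + g)) * SC) + 24 * (F (sv (a + 2 * g)) * SC)
          + 64 * (F (sv (a + 3 * g)) * SC) + 14 * (F (sv (a + 4 * g)) * SC)) := by field_simp
      _ ≤ (g * (14 * X0 + 64 * X1 + 24 * X2 + 64 * X3 + 14 * X4) : ℝ) := by gcongr
  refine ⟨g * (14 * A0 + 64 * A1 + 24 * A2 + 64 * A3 + 14 * A4) / (45 * SC) + 1,
    g * (14 * B0 + 64 * B1 + 24 * B2 + 64 * B3 + 14 * B4) / (45 * SC) + 1,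
    key (XS.EA (by norm_num)) a0 a1 a2 a3 a4, key (XS.EB (by norm_num)) b0 b1 b2 b3 b4, fun k => ?_⟩
  simp only [boole, frc_eq, e0, e1, e2, e3, e4]

/-- accumulate over the panels -/
noncomputable def accG {α : Type} (G : ℕ → ℕ → (ℕ → ℕ → α) → α) (k : ℕ → ℕ → α) (l : List ℕ) :
    ℕ → ℕ → ℕ → α :=
  List.rec (motive := fun _ => ℕ → ℕ → ℕ → α) (fun _ A B => k A B)
    (fun g _ ih a A B => G a g fun A' B' => frc (A + A') fun A'' => frc (B + B') fun B'' =>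
      frc (a + 4 * g) fun a' => ih a' A'' B'') l

theorem accG_nil {α : Type} (G : ℕ → ℕ → (ℕ → ℕ → α) → α) (k : ℕ → ℕ → α) (a A B : ℕ) :
    accG G k [] a A B = k A B := rfl

theorem accG_cons {α : Type} (G : ℕ → ℕ → (ℕ → ℕ → α) → α) (k : ℕ → ℕ → α) (g : ℕ) (l : List ℕ)
    (a A B : ℕ) : accG G k (g :: l) a A B = G a g fun A' B' => accG G k l (a + 4 * g) (A + A') (B + B') := by
  have : accG G k (g :: l) a A B = G a g fun A' B' => frc (A + A') fun A'' => frc (B + B') fun B'' =>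
      frc (a + 4 * g) fun a' => accG G k l a' A'' B'' := rfl
  rw [this]; simp only [frc_eq]

noncomputable def finalCheck2 : Bool :=
  accG gauss (fun A B => accG boole (fun A' B' =>
    Nat.ble (B' + SC / 10 ^ 6 + 1) A && Nat.ble (A' + SC / 10 ^ 6 + 1) B) mesh mesh0 0 0) mesh mesh0 0 0

theorem fc2 : finalCheck2 = true := by decide +kernel

theorem accLo_spec (l : List ℕ) : ∀ {a : ℕ} (A B : ℕ) (_ : 0 < a), ∃ A' B',
    LoB A' ((∫ s in sv a..sv (a + 4 * l.sum), EA (1044 / 1000) s) + A / SC) ∧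
    LoB B' ((∫ s in sv a..sv (a + 4 * l.sum), EB (1045 / 1000) s) + B / SC) ∧
    ∀ k : ℕ → ℕ → Bool, accG gauss k l a A B = k A' B' := by
  have S0 := SC_pos
  induction l with
  | nil =>
    intro a A B ha
    refine ⟨A, B, ?_, ?_, fun k => accG_nil _ _ _ _ _⟩ <;>
    · unfold LoB
      simp only [List.sum_nil, mul_zero, add_zero, intervalIntegral.integral_same, zero_add]
      rw [div_mul_cancel₀ _ S0.ne']
  | cons g l ih =>
    intro a A B ha
    obtain ⟨A1, B1, a1, b1, e1⟩ := gauss_spec g ha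
    obtain ⟨A2, B2, a2, b2, e2⟩ := ih (a := a + 4 * g) (A + A1) (B + B1) (by omega)
    have ee : a + 4 * (g :: l).sum = a + 4 * g + 4 * l.sum := by rw [List.sum_cons]; ring
    refine ⟨A2, B2, ?_, ?_, fun k => by rw [accG_cons, e1, e2]⟩
    · refine a2.mono ?_
      rw [ee, ← intervalIntegral.integral_add_adjacent_intervals
        ((XS.EA (by norm_num)).ii (sv_lt ha) (sv_lt (x := a + 4 * g) (by omega)))
        ((XS.EA (by norm_num)).ii (sv_lt (x := a + 4 * g) (by omega)) (sv_lt (by omega)))]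
      have := (div_le_iff₀ S0).2 a1
      push_cast
      rw [add_div]
      linarith
    · refine b2.mono ?_
      rw [ee, ← intervalIntegral.integral_add_adjacent_intervals
        ((XS.EB (by norm_num)).ii (sv_lt ha) (sv_lt (x := a + 4 * g) (by omega)))
        ((XS.EB (by norm_num)).ii (sv_lt (x := a + 4 * g) (by omega)) (sv_lt (by omega)))]
      have := (div_le_iff₀ S0).2 b1
      push_cast
      rw [add_div]
      linarith

theorem accHi_spec (l : List ℕ) : ∀ {a : ℕ} (A B : ℕ) (_ : 0 < a), ∃ A' B',
    HiB A' ((∫ s in sv a..sv (a + 4 * l.sum), EA (1045 / 1000) s) + A / SC) ∧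
    HiB B' ((∫ s in sv a..sv (a + 4 * l.sum), EB (1044 / 1000) s) + B / SC) ∧
    ∀ k : ℕ → ℕ → Bool, accG boole k l a A B = k A' B' := by
  have S0 := SC_pos
  induction l with
  | nil =>
    intro a A B ha
    refine ⟨A, B, ?_, ?_, fun k => accG_nil _ _ _ _ _⟩ <;>
    · unfold HiB
      simp only [List.sum_nil, mul_zero, add_zero, intervalIntegral.integral_same, zero_add]
      rw [div_mul_cancel₀ _ S0.ne']
  | cons g l ih =>
    intro a A B ha
    obtain ⟨A1, B1, a1, b1, e1⟩ := boole_spec g ha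
    obtain ⟨A2, B2, a2, b2, e2⟩ := ih (a := a + 4 * g) (A + A1) (B + B1) (by omega)
    have ee : a + 4 * (g :: l).sum = a + 4 * g + 4 * l.sum := by rw [List.sum_cons]; ring
    refine ⟨A2, B2, ?_, ?_, fun k => by rw [accG_cons, e1, e2]⟩
    · refine a2.mono ?_
      rw [ee, ← intervalIntegral.integral_add_adjacent_intervals
        ((XS.EA (by norm_num)).ii (sv_lt ha) (sv_lt (x := a + 4 * g) (by omega)))
        ((XS.EA (by norm_num)).ii (sv_lt (x := a + 4 * g) (by omega)) (sv_lt (by omega)))]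
      have := (le_div_iff₀ S0).2 a1
      push_cast
      rw [add_div]
      linarith
    · refine b2.mono ?_
      rw [ee, ← intervalIntegral.integral_add_adjacent_intervals
        ((XS.EB (by norm_num)).ii (sv_lt ha) (sv_lt (x := a + 4 * g) (by omega)))
        ((XS.EB (by norm_num)).ii (sv_lt (x := a + 4 * g) (by omega)) (sv_lt (by omega)))]
      have := (le_div_iff₀ S0).2 b1
      push_cast
      rw [add_div]
      linarith

theorem mesh_sum : Nat.beq (mesh0 + 4 * mesh.sum) (16 * SC) = true := by decide +kernel
theorem SC_val : SC = 2 ^ 80 := by unfold SC; rfl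

theorem margin {m n : ℕ} {x y : ℝ} (h : Nat.ble (m + SC / 10 ^ 6 + 1) n = true) (hm : HiB m x) (hn : LoB n y) :
    x + 1 / 10 ^ 6 ≤ y := by
  have S0 := SC_pos
  have h' : m + SC / 10 ^ 6 + 1 ≤ n := Nat.le_of_ble_eq_true h
  have h2 : SC ≤ (SC / 10 ^ 6 + 1) * 10 ^ 6 := by omega
  have h3 : (SC:ℝ) ≤ ((SC / 10 ^ 6 + 1 : ℕ):ℝ) * 10 ^ 6 := by exact_mod_cast h2
  have h4 : (m:ℝ) + ((SC / 10 ^ 6 + 1 : ℕ):ℝ) ≤ n := by exact_mod_cast h'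
  unfold HiB at hm
  unfold LoB at hn
  have : (x + 1 / 10 ^ 6) * SC ≤ y * SC := by linarith
  exact le_of_mul_le_mul_right this S0

theorem num_main : (∫ s in (1 + 1 / 2 ^ 36)..17, EB (1044 / 1000) s) + 1 / 10 ^ 6 ≤
      (∫ s in (1 + 1 / 2 ^ 36)..17, EA (1044 / 1000) s) ∧
    (∫ s in (1 + 1 / 2 ^ 36)..17, EA (1045 / 1000) s) + 1 / 10 ^ 6 ≤
      (∫ s in (1 + 1 / 2 ^ 36)..17, EB (1045 / 1000) s) := by
  have S0 := SC_pos
  have m0 : 0 < mesh0 := by unfold mesh0; positivity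
  obtain ⟨A, B, ha, hb, e⟩ := accLo_spec mesh 0 0 m0
  obtain ⟨A', B', ha', hb', e'⟩ := accHi_spec mesh 0 0 m0
  have h := fc2
  unfold finalCheck2 at h
  rw [e, e', Bool.and_eq_true] at h
  have q1 : sv mesh0 = 1 + 1 / 2 ^ 36 := by
    unfold sv mesh0; rw [SC_val]; norm_num
  have q2 : sv (mesh0 + 4 * mesh.sum) = 17 := by
    have := Nat.eq_of_beq_eq_true mesh_sum
    rw [this]; unfold sv; push_cast; field_simp; norm_num
  rw [q1, q2, Nat.cast_zero, zero_div, add_zero] at ha hb ha' hb'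
  exact ⟨margin h.1 hb' ha, margin h.2 ha' hb⟩
theorem pz_le_log {s : ℝ} (hs : 1 < s) : primeZeta s ≤ log (Zr s) := by
  rw [← exp_log_tsum hs, log_exp]
  refine (pz_summable hs).tsum_le_tsum (fun p => ?_) (log_summable hs)
  have h1 := q_lt_one p hs
  have := log_le_sub_one_of_pos (x := 1 - (p.1 : ℝ) ^ (-s)) (by linarith)
  linarith

theorem pz_two_le : primeZeta 2 ≤ 2 / 3 := by
  refine (pz_le_log (by norm_num)).trans ?_
  have h : Zr 2 = π ^ 2 / 6 := by
    rw [← hasSum_zeta_two.tsum_eq]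
    unfold Zr
    congr 1; ext n
    rw [rpow_neg (Nat.cast_nonneg n), one_div]
    norm_cast
  have h1 := log_le_sub_one_of_pos (Zr_pos (s := 2) (by norm_num))
  rw [h] at h1 ⊢
  have h3 := pi_lt_d2
  have h4 := pi_pos
  nlinarith

theorem rp_le_half {p : ℝ} (hp : 2 ≤ p) {s : ℝ} (hs : 1 < s) : p ^ (-s) ≤ 1 / 2 := by
  calc p ^ (-s) ≤ p ^ (-1:ℝ) := rpow_le_rpow_of_exponent_le (by linarith) (by linarith)
    _ = p⁻¹ := rpow_neg_one p
    _ ≤ 1 / 2 := by rw [one_div]; exact inv_anti₀ two_pos hp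

theorem Zr_le' {s : ℝ} (hs : 1 < s) (h2 : s ≤ 2) : Zr s ≤ 17 / (s - 1) := by
  refine (Zr_le hs).trans ?_
  have hu : 0 < s - 1 := by linarith
  have a1 := rp_le_half (p := 2) (by norm_num) hs
  have b1 := rp_le_half (p := 3) (by norm_num) hs
  have c1 := rp_le_half (p := 5) (by norm_num) hs
  have d1 := rp_le_half (p := 7) (by norm_num) hs
  have e1 := rp_le_half (p := 11) (by norm_num) hs
  have f1 := rp_le_half (p := 13) (by norm_num) hs
  have a0 : 0 ≤ (2:ℝ) ^ (-s) := by positivity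
  have b0 : 0 ≤ (3:ℝ) ^ (-s) := by positivity
  have c0 : 0 ≤ (5:ℝ) ^ (-s) := by positivity
  have d0 : 0 ≤ (7:ℝ) ^ (-s) := by positivity
  generalize (2:ℝ) ^ (-s) = a at *
  generalize (3:ℝ) ^ (-s) = b at *
  generalize (5:ℝ) ^ (-s) = c at *
  generalize (7:ℝ) ^ (-s) = d at *
  generalize (11:ℝ) ^ (-s) = e at *
  generalize (13:ℝ) ^ (-s) = f at *
  have aa : a * a ≤ 1 / 2 * (1 / 2) := by gcongr
  have hz : zs15 a b c d e f ≤ 15 := by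
    unfold zs15
    have : a * b ≤ 1 / 2 * (1 / 2) := by gcongr
    have : a * a * a ≤ 1 / 2 * (1 / 2) * (1 / 2) := by gcongr
    have : b * b ≤ 1 / 2 * (1 / 2) := by gcongr
    have : a * c ≤ 1 / 2 * (1 / 2) := by gcongr
    have : a * a * b ≤ 1 / 2 * (1 / 2) * (1 / 2) := by gcongr
    have : a * d ≤ 1 / 2 * (1 / 2) := by gcongr
    have : b * c ≤ 1 / 2 * (1 / 2) := by gcongr
    linarith
  have h4 : a ^ 4 ≤ 1 / 16 := by
    calc a ^ 4 ≤ (1 / 2) ^ 4 := by gcongr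
      _ = _ := by norm_num
  have h40 : 0 ≤ a ^ 4 := by positivity
  rw [le_div_iff₀ hu]
  have ez : (zs15 a b c d e f + (a ^ 4 * 16 / (s - 1) + a ^ 4 / 2 + s * a ^ 4 / 192)) * (s - 1) =
      zs15 a b c d e f * (s - 1) + a ^ 4 * 16 + (a ^ 4 / 2 + s * a ^ 4 / 192) * (s - 1) := by
    field_simp
    ring
  rw [ez]
  have k1 : zs15 a b c d e f * (s - 1) ≤ 15 * 1 := by
    have : s - 1 ≤ 1 := by linarith
    gcongr
  have k2 : (a ^ 4 / 2 + s * a ^ 4 / 192) * (s - 1) ≤ 1 * 1 := by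
    have : s - 1 ≤ 1 := by linarith
    have : a ^ 4 / 2 + s * a ^ 4 / 192 ≤ 1 := by nlinarith
    gcongr
  linarith

theorem pz_le_rp {s : ℝ} (hs : 1 < s) (h2 : s ≤ 2) : primeZeta s ≤ 16 * (17 / (s - 1)) ^ (1 / 16 : ℝ) := by
  have hu : 0 < s - 1 := by linarith
  have h1 := (pz_le_log hs).trans (log_le_log (Zr_pos hs) (Zr_le' hs h2))
  have := log_le_rpow_div (x := 17 / (s - 1)) (ε := 1 / 16) (by positivity) (by norm_num)
  refine h1.trans (this.trans (le_of_eq ?_))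
  ring

theorem pz_sq_le {s : ℝ} (hs : 1 < s) (h2 : s ≤ 2) : primeZeta s ^ 2 ≤ 400 * (s - 1) ^ (-(1 / 8) : ℝ) := by
  have hu : 0 < s - 1 := by linarith
  calc primeZeta s ^ 2 ≤ (16 * (17 / (s - 1)) ^ (1 / 16 : ℝ)) ^ 2 := by
        have := pz_nonneg s
        have := pz_le_rp hs h2
        gcongr
    _ = 256 * (17 / (s - 1)) ^ (1 / 8 : ℝ) := by
        rw [mul_pow, ← rpow_natCast, ← rpow_natCast, ← rpow_mul (by positivity)]
        norm_num
    _ = 256 * (17:ℝ) ^ (1 / 8 : ℝ) * (s - 1) ^ (-(1 / 8) : ℝ) := by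
        rw [div_rpow (by norm_num) hu.le, rpow_neg hu.le]
        ring
    _ ≤ 256 * (25 / 16) * (s - 1) ^ (-(1 / 8) : ℝ) := by
        have : (17:ℝ) ^ (1 / 8 : ℝ) ≤ 25 / 16 := by
          rw [rpow_le_iff_le_log (by norm_num) (by norm_num)]
          have : log 17 ≤ log ((25 / 16) ^ 8) := log_le_log (by norm_num) (by norm_num)
          rw [log_pow] at this
          push_cast at this
          linarith
        gcongr
    _ = _ := by norm_num

theorem pz_le_rp' {s : ℝ} (hs : 1 < s) (h2 : s ≤ 2) : primeZeta s ≤ 400 * (s - 1) ^ (-(1 / 8) : ℝ) := by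
  have hu : 0 < s - 1 := by linarith
  have h1 := pz_sq_le hs h2
  have h3 : (1:ℝ) ≤ (s - 1) ^ (-(1 / 8) : ℝ) :=
    one_le_rpow_of_pos_of_le_one_of_nonpos hu (by linarith) (by norm_num)
  nlinarith [sq_nonneg (primeZeta s - 1)]

theorem pz_tail {s : ℝ} (hs : 2 ≤ s) : primeZeta s ≤ 2 / 3 * (2:ℝ) ^ (2 - s) := by
  have h : primeZeta s ≤ primeZeta 2 * (2:ℝ) ^ (2 - s) := by
    unfold primeZeta
    rw [← tsum_mul_right]
    refine (pz_summable (by linarith)).tsum_le_tsum (fun p => ?_) ((pz_summable (by norm_num)).mul_right _)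
    calc (p.1:ℝ) ^ (-s) = (p.1:ℝ) ^ (-2:ℝ) * (p.1:ℝ) ^ (2 - s) := by
          rw [← rpow_add (prime_pos p)]; congr 1; ring
      _ ≤ (p.1:ℝ) ^ (-2:ℝ) * (2:ℝ) ^ (2 - s) := by
          gcongr ?_ * ?_
          exact rpow_le_rpow_of_nonpos two_pos (prime_two_le p) (by linarith)
  refine h.trans ?_
  gcongr
  exact pz_two_le

theorem pz2_le {s : ℝ} (hs : 1 < s) : primeZeta (2 * s) ≤ primeZeta s ^ 2 := by
  have hle : ∀ p : Nat.Primes, (p.1:ℝ) ^ (-s) ≤ primeZeta s := fun p =>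
    (pz_summable hs).le_tsum p fun q _ => (q_pos q s).le
  rw [pow_two]
  nth_rewrite 1 [primeZeta]
  nth_rewrite 2 [primeZeta]
  rw [← tsum_mul_left]
  refine (pz_summable (by linarith)).tsum_le_tsum (fun p => ?_) ((pz_summable hs).mul_left _)
  calc (p.1:ℝ) ^ (-(2 * s)) = (p.1:ℝ) ^ (-s) * (p.1:ℝ) ^ (-s) := by
        rw [← rpow_add (prime_pos p)]; congr 1; ring
    _ ≤ _ := by have := hle p; have := (q_pos p s).le; gcongr

theorem P2_le {s : ℝ} (hs : 1 < s) : (primeZeta s ^ 2 + primeZeta (2 * s)) / 2 ≤ primeZeta s ^ 2 := by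
  linarith [pz2_le hs]

theorem pz_le_exp {s : ℝ} (hs : 2 < s) : primeZeta s ≤ 4 * exp (-(1 / 2) * s) := by
  have h1 := pz_tail hs.le
  have h2 : (2:ℝ) ^ (2 - s) = 4 * exp (-(log 2) * s) := by
    rw [rpow_sub two_pos, rpow_def_of_pos two_pos s, neg_mul, exp_neg]
    norm_num
    rfl
  have h3 : exp (-(log 2) * s) ≤ exp (-(1 / 2) * s) := by
    rw [exp_le_exp]
    nlinarith [log_two_gt_d9]
  have := exp_pos (-(log 2) * s)
  rw [h2] at h1
  linarith

theorem pz_le_one {s : ℝ} (hs : 2 ≤ s) : primeZeta s ≤ 2 / 3 := by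
  refine (pz_tail hs).trans ?_
  have : (2:ℝ) ^ (2 - s) ≤ 1 := rpow_le_one_of_one_le_of_nonpos (by norm_num) (by linarith)
  linarith

theorem P2_le_pz {s : ℝ} (hs : 2 ≤ s) : (primeZeta s ^ 2 + primeZeta (2 * s)) / 2 ≤ primeZeta s := by
  have := P2_le (s := s) (by linarith)
  nlinarith [pz_le_one hs, pz_nonneg s]

theorem rp_int (b : ℝ) : IntegrableOn (fun s : ℝ => 400 * (s - 1) ^ (-(1 / 8) : ℝ)) (Set.Ioc 1 (1 + b)) := by
  rcases le_total b 0 with hb | hb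
  · rw [Set.Ioc_eq_empty (by linarith)]; exact integrableOn_empty
  have h := (intervalIntegral.intervalIntegrable_rpow' (a := 0) (b := b) (r := (-(1 / 8) : ℝ)) (by norm_num)).comp_sub_right 1
  rw [zero_add, intervalIntegrable_iff_integrableOn_Ioc_of_le (by linarith), add_comm b] at h
  exact h.const_mul 400

theorem XS.aesm {F : ℝ → ℝ} (hF : XS F) : AEStronglyMeasurable F (volume.restrict (Set.Ioi 1)) :=
  (aemeasurable_restrict_of_antitoneOn measurableSet_Ioi hF.anti).aestronglyMeasurable

theorem XS.integrable {F : ℝ → ℝ} (hF : XS F) (h1 : ∀ s, 1 < s → s ≤ 2 → F s ≤ 400 * (s - 1) ^ (-(1 / 8) : ℝ))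
    (h2 : ∀ s, 2 < s → F s ≤ 4 * exp (-(1 / 2) * s)) : IntegrableOn F (Set.Ioi 1) := by
  rw [← Set.Ioc_union_Ioi_eq_Ioi (show (1:ℝ) ≤ 2 by norm_num)]
  refine IntegrableOn.union ?_ ?_
  · have := rp_int 1
    rw [show (1:ℝ) + 1 = 2 by norm_num] at this
    refine Integrable.mono' this (hF.aesm.mono_set Set.Ioc_subset_Ioi_self) ?_
    refine (ae_restrict_mem measurableSet_Ioc).mono fun s hs => ?_
    rw [norm_of_nonneg (hF.nonneg hs.1)]
    exact h1 s hs.1 hs.2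
  · have := (exp_neg_integrableOn_Ioi 2 (b := 1 / 2) (by norm_num)).const_mul 4
    refine Integrable.mono' this (hF.aesm.mono_set (Set.Ioi_subset_Ioi (by norm_num))) ?_
    refine (ae_restrict_mem measurableSet_Ioi).mono fun s hs => ?_
    have hs : 2 < s := hs
    rw [norm_of_nonneg (hF.nonneg (by linarith))]
    exact h2 s hs

theorem ex_le_one {t s : ℝ} (ht : 0 ≤ t) (hs : 1 < s) : exp ((1 - s) * t) ≤ 1 := by
  rw [exp_le_one_iff]; nlinarith

theorem P2_nonneg (s : ℝ) : 0 ≤ (primeZeta s ^ 2 + primeZeta (2 * s)) / 2 := by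
  have := pz_nonneg s
  have := pz_nonneg (2 * s)
  positivity

theorem EA_le {t s : ℝ} (ht : 0 ≤ t) (hs : 1 < s) : EA t s ≤ primeZeta s :=
  mul_le_of_le_one_right (pz_nonneg s) (ex_le_one ht hs)
theorem EB_le {t s : ℝ} (ht : 0 ≤ t) (hs : 1 < s) : EB t s ≤ (primeZeta s ^ 2 + primeZeta (2 * s)) / 2 :=
  mul_le_of_le_one_right (P2_nonneg s) (ex_le_one ht hs)

theorem EA_h1 {t : ℝ} (ht : 0 ≤ t) : ∀ s, 1 < s → s ≤ 2 → EA t s ≤ 400 * (s - 1) ^ (-(1 / 8) : ℝ) :=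
  fun _ h h' => (EA_le ht h).trans (pz_le_rp' h h')
theorem EB_h1 {t : ℝ} (ht : 0 ≤ t) : ∀ s, 1 < s → s ≤ 2 → EB t s ≤ 400 * (s - 1) ^ (-(1 / 8) : ℝ) :=
  fun _ h h' => (EB_le ht h).trans ((P2_le h).trans (pz_sq_le h h'))
theorem EA_int {t : ℝ} (ht : 0 ≤ t) : IntegrableOn (EA t) (Set.Ioi 1) :=
  (XS.EA ht).integrable (EA_h1 ht) fun _ h => (EA_le ht (by linarith)).trans (pz_le_exp h)
theorem EB_int {t : ℝ} (ht : 0 ≤ t) : IntegrableOn (EB t) (Set.Ioi 1) :=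
  (XS.EB ht).integrable (EB_h1 ht) fun _ h => (EB_le ht (by linarith)).trans ((P2_le_pz h.le).trans (pz_le_exp h))

theorem ex_le' {t s : ℝ} (ht : 1 ≤ t) (hs : 2 < s) : exp ((1 - s) * t) ≤ exp 1 * exp (-s) := by
  rw [← exp_add, exp_le_exp]; nlinarith
theorem EA_tail {t : ℝ} (ht : 1 ≤ t) : ∀ s, 2 < s → EA t s ≤ exp 1 * exp (-s) := fun s hs => by
  unfold EA
  calc _ ≤ 1 * exp ((1 - s) * t) := by gcongr; linarith [pz_le_one hs.le]
    _ ≤ _ := by rw [one_mul]; exact ex_le' ht hs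
theorem EB_tail {t : ℝ} (ht : 1 ≤ t) : ∀ s, 2 < s → EB t s ≤ exp 1 * exp (-s) := fun s hs => by
  unfold EB
  calc _ ≤ 1 * exp ((1 - s) * t) := by gcongr; linarith [pz_le_one hs.le, P2_le_pz hs.le]
    _ ≤ _ := by rw [one_mul]; exact ex_le' ht hs

theorem XS.split {F : ℝ → ℝ} (hi : IntegrableOn F (Set.Ioi 1)) :
    ∫ s in Set.Ioi 1, F s = (∫ s in Set.Ioc 1 (1 + 1 / 2 ^ 36), F s) +
      (∫ s in (1 + 1 / 2 ^ 36)..17, F s) + ∫ s in Set.Ioi 17, F s := by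
  have h1 : (1:ℝ) ≤ 1 + 1 / 2 ^ 36 := by norm_num
  have h2 : (1 + 1 / 2 ^ 36 : ℝ) ≤ 17 := by norm_num
  have i2 : IntegrableOn F (Set.Ioi (1 + 1 / 2 ^ 36)) := hi.mono_set (Set.Ioi_subset_Ioi h1)
  rw [← Set.Ioc_union_Ioi_eq_Ioi h1, setIntegral_union Set.Ioc_disjoint_Ioi_same measurableSet_Ioi
    (hi.mono_set Set.Ioc_subset_Ioi_self) i2,
    ← Set.Ioc_union_Ioi_eq_Ioi h2, setIntegral_union Set.Ioc_disjoint_Ioi_same measurableSet_Ioi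
    (i2.mono_set Set.Ioc_subset_Ioi_self) (i2.mono_set (Set.Ioi_subset_Ioi h2)),
    intervalIntegral.integral_of_le h2, add_assoc]

theorem XS.ge_mid {F : ℝ → ℝ} (hF : XS F) (hi : IntegrableOn F (Set.Ioi 1)) :
    (∫ s in (1 + 1 / 2 ^ 36)..17, F s) ≤ ∫ s in Set.Ioi 1, F s := by
  rw [XS.split hi]
  have h1 : 0 ≤ ∫ s in Set.Ioc 1 (1 + 1 / 2 ^ 36), F s :=
    setIntegral_nonneg measurableSet_Ioc fun s hs => hF.nonneg hs.1
  have h2 : 0 ≤ ∫ s in Set.Ioi 17, F s :=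
    setIntegral_nonneg measurableSet_Ioi fun s hs => hF.nonneg (lt_trans (by norm_num) hs)
  linarith

theorem rp_val : ∫ s : ℝ in Set.Ioc (1:ℝ) (1 + 1 / 2 ^ 36), 400 * (s - 1) ^ (-(1 / 8) : ℝ) ≤ 1 / 2 * (1 / 10 ^ 6) := by
  rw [← intervalIntegral.integral_of_le (by norm_num), intervalIntegral.integral_const_mul,
    intervalIntegral.integral_comp_sub_right (fun x : ℝ => x ^ (-(1 / 8) : ℝ)) 1,
    integral_rpow (Or.inl (by norm_num))]
  have e : (1 + 1 / 2 ^ 36 - 1 : ℝ) = 2 ^ (-36 : ℝ) := by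
    rw [rpow_neg two_pos.le]; norm_num
  rw [e, ← rpow_mul two_pos.le, sub_self, zero_rpow (by norm_num)]
  have : (2:ℝ) ^ (-36 * (-(1 / 8) + 1) : ℝ) ≤ (2:ℝ) ^ (-(31:ℕ) : ℝ) :=
    rpow_le_rpow_of_exponent_le (by norm_num) (by norm_num)
  rw [rpow_neg two_pos.le, rpow_natCast] at this
  norm_num at this ⊢
  linarith

theorem XS.le_mid {F : ℝ → ℝ} (hi : IntegrableOn F (Set.Ioi 1))
    (h1 : ∀ s, 1 < s → s ≤ 2 → F s ≤ 400 * (s - 1) ^ (-(1 / 8) : ℝ))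
    (h2 : ∀ s, 2 < s → F s ≤ exp 1 * exp (-s)) :
    (∫ s in Set.Ioi 1, F s) < (∫ s in (1 + 1 / 2 ^ 36)..17, F s) + 1 / 10 ^ 6 := by
  rw [XS.split hi]
  have k1 : ∫ s in Set.Ioc 1 (1 + 1 / 2 ^ 36), F s ≤ 1 / 2 * (1 / 10 ^ 6) := by
    refine le_trans ?_ rp_val
    refine setIntegral_mono_on (hi.mono_set Set.Ioc_subset_Ioi_self) (rp_int _) measurableSet_Ioc fun s hs => ?_
    exact h1 s hs.1 (hs.2.trans (by norm_num))
  have k2 : ∫ s in Set.Ioi 17, F s ≤ exp 1 * exp (-17) := by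
    rw [← integral_exp_neg_Ioi, ← integral_const_mul]
    have := (exp_neg_integrableOn_Ioi 17 (b := 1) (by norm_num)).const_mul (exp 1)
    simp only [neg_mul, one_mul] at this
    refine setIntegral_mono_on (hi.mono_set (Set.Ioi_subset_Ioi (by norm_num))) this measurableSet_Ioi fun s hs => ?_
    exact h2 s (lt_trans (by norm_num) hs)
  have k3 : exp 1 * exp (-17) < 1 / 2 * (1 / 10 ^ 6) := by
    rw [← exp_add, show (1 + -17 : ℝ) = -(16 : ℕ) * 1 by norm_num, neg_mul, exp_neg, exp_nat_mul]
    have := exp_one_gt_d9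
    have h : (2.7:ℝ) ^ 16 < exp 1 ^ 16 := by gcongr; linarith
    calc (exp 1 ^ 16)⁻¹ < ((2.7:ℝ) ^ 16)⁻¹ := by gcongr
      _ < _ := by norm_num
  linarith

/-- the integral of the statement -/
noncomputable def Iz (t : ℝ) : ℝ := ∫ s in Set.Ioi (1:ℝ),
        (primeZeta s - (primeZeta s ^ 2 + primeZeta (2 * s)) / 2) * Real.exp ((1 - s) * t)

theorem Iz_eq {t : ℝ} (ht : 0 ≤ t) : Iz t = (∫ s in Set.Ioi 1, EA t s) - ∫ s in Set.Ioi 1, EB t s := by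
  rw [← integral_sub (EA_int ht) (EB_int ht)]
  unfold Iz EA EB
  congr 1; ext s; ring

theorem Iz_pos : 0 < Iz (1044 / 1000) := by
  have h0 : (0:ℝ) ≤ 1044 / 1000 := by norm_num
  have h1 : (1:ℝ) ≤ 1044 / 1000 := by norm_num
  rw [Iz_eq h0]
  linarith [num_main.1, (XS.EA h0).ge_mid (EA_int h0), XS.le_mid (EB_int h0) (EB_h1 h0) (EB_tail h1)]

theorem Iz_neg : Iz (1045 / 1000) < 0 := by
  have h0 : (0:ℝ) ≤ 1045 / 1000 := by norm_num
  have h1 : (1:ℝ) ≤ 1045 / 1000 := by norm_num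
  rw [Iz_eq h0]
  linarith [num_main.2, (XS.EB h0).ge_mid (EB_int h0), XS.le_mid (EA_int h0) (EA_h1 h0) (EA_tail h1)]
theorem Iz_cont : ContinuousOn Iz (Set.Ici 0) := by
  have e : Set.EqOn Iz (fun t => (∫ s in Set.Ioi 1, EA t s) - ∫ s in Set.Ioi 1, EB t s) (Set.Ici 0) :=
    fun t ht => Iz_eq ht
  refine ContinuousOn.congr (ContinuousOn.sub ?_ ?_) e
  · refine continuousOn_of_dominated (bound := EA 0) (fun t ht => (XS.EA ht).aesm) (fun t ht => ?_)
      (EA_int le_rfl) (Filter.Eventually.of_forall fun s => ?_)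
    · refine (ae_restrict_mem measurableSet_Ioi).mono fun s hs => ?_
      rw [norm_of_nonneg ((XS.EA ht).nonneg hs)]
      refine (EA_le ht hs).trans (le_of_eq ?_)
      simp [EA]
    · unfold EA; fun_prop
  · refine continuousOn_of_dominated (bound := EB 0) (fun t ht => (XS.EB ht).aesm) (fun t ht => ?_)
      (EB_int le_rfl) (Filter.Eventually.of_forall fun s => ?_)
    · refine (ae_restrict_mem measurableSet_Ioi).mono fun s hs => ?_
      rw [norm_of_nonneg ((XS.EB ht).nonneg hs)]
      refine (EB_le ht hs).trans (le_of_eq ?_)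
      simp [EB]
    · unfold EB; fun_prop

noncomputable def fz (s : ℝ) : ℝ := primeZeta s - (primeZeta s ^ 2 + primeZeta (2 * s)) / 2

theorem pz_pos {s : ℝ} (hs : 1 < s) : 0 < primeZeta s :=
  (q_pos (prm 2 Nat.prime_two) s).trans_le ((pz_summable hs).le_tsum _ fun q _ => (q_pos q s).le)

theorem pz_strict {s r : ℝ} (hs : 1 < s) (hr : s < r) : primeZeta r < primeZeta s := by
  have hlt : ∀ p : Nat.Primes, (p.1:ℝ) ^ (-r) < (p.1:ℝ) ^ (-s) := fun p =>
    rpow_lt_rpow_of_exponent_lt (by linarith [prime_two_le p]) (by linarith)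
  exact (pz_summable (hs.trans hr)).tsum_lt_tsum (fun p => (hlt p).le) (hlt (prm 2 Nat.prime_two)) (pz_summable hs)

theorem fz_pos_of {s r : ℝ} (hs : 1 < s) (hr : s < r) (h : 0 ≤ fz s) : 0 < fz r := by
  have x0 := pz_pos hs
  have y0 := pz_pos (hs.trans hr)
  have xy := pz_strict hs hr
  have ab := pz_strict (s := 2 * s) (r := 2 * r) (by linarith) (by linarith)
  have by2 := pz2_le (hs.trans hr)
  unfold fz at *
  generalize primeZeta s = x at *
  generalize primeZeta r = y at *
  generalize primeZeta (2 * s) = a at *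
  generalize primeZeta (2 * r) = b at *
  have h1 : x ^ 2 + b < 2 * x := by linarith
  by_contra hc
  have h2 : 2 * y ≤ y ^ 2 + b := by linarith
  have h3 : 0 < x * y - b := by nlinarith
  linarith [mul_lt_mul_of_pos_right h1 y0, mul_le_mul_of_nonneg_right h2 x0.le, mul_pos h3 (sub_pos.2 xy)]

theorem fz_pos_two {s : ℝ} (hs : 2 ≤ s) : 0 < fz s := by
  unfold fz
  have h1 := P2_le (s := s) (by linarith)
  have h2 := pz_le_one hs
  have h3 := pz_pos (s := s) (by linarith)
  nlinarith

theorem sign_change : ∃ s₀ : ℝ, 1 ≤ s₀ ∧ (∀ s, s₀ < s → 0 < fz s) ∧ ∀ s, 1 < s → s < s₀ → fz s ≤ 0 := by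
  let S : Set ℝ := {s | 1 < s ∧ 0 < fz s}
  have hne : S.Nonempty := ⟨2, by norm_num, fz_pos_two le_rfl⟩
  have hbd : BddBelow S := ⟨1, fun s hs => hs.1.le⟩
  refine ⟨sInf S, le_csInf hne fun s hs => hs.1.le, fun s hs => ?_, fun s h1 hs => ?_⟩
  · obtain ⟨r, hr, hrs⟩ := exists_lt_of_csInf_lt hne hs
    exact fz_pos_of hr.1 hrs hr.2.le
  · by_contra hc
    exact absurd (csInf_le hbd (show s ∈ S from ⟨h1, not_le.1 hc⟩)) (not_le.2 hs)

theorem fz_int {t : ℝ} (ht : 0 ≤ t) : IntegrableOn (fun s => fz s * exp ((1 - s) * t)) (Set.Ioi 1) := by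
  refine ((EA_int ht).sub (EB_int ht)).congr (Filter.Eventually.of_forall fun s => ?_)
  simp only [Pi.sub_apply, EA, EB, fz]; ring

theorem Iz_mono : ∃ c : ℝ, ∀ t u : ℝ, 0 ≤ t → t < u → exp (c * u) * Iz u < exp (c * t) * Iz t := by
  obtain ⟨s₀, h1, hp, hn⟩ := sign_change
  refine ⟨s₀ - 1, fun t u ht htu => ?_⟩
  have hu : 0 ≤ u := ht.trans htu.le
  rw [← sub_pos]
  have it := (fz_int ht).const_mul (exp ((s₀ - 1) * t))
  have iu := (fz_int hu).const_mul (exp ((s₀ - 1) * u))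
  have e : exp ((s₀ - 1) * t) * Iz t - exp ((s₀ - 1) * u) * Iz u = ∫ s in Set.Ioi 1,
      (exp ((s₀ - 1) * t) * (fz s * exp ((1 - s) * t)) - exp ((s₀ - 1) * u) * (fz s * exp ((1 - s) * u))) := by
    rw [integral_sub it iu, integral_const_mul, integral_const_mul]
    rfl
  have e2 : ∀ s, exp ((s₀ - 1) * t) * (fz s * exp ((1 - s) * t)) - exp ((s₀ - 1) * u) * (fz s * exp ((1 - s) * u))
      = fz s * (exp ((s₀ - s) * t) - exp ((s₀ - s) * u)) := by
    intro s
    rw [show (s₀ - s) * t = (s₀ - 1) * t + (1 - s) * t by ring,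
      show (s₀ - s) * u = (s₀ - 1) * u + (1 - s) * u by ring, exp_add, exp_add]
    ring
  have hpos : ∀ s, s₀ < s → 0 < fz s * (exp ((s₀ - s) * t) - exp ((s₀ - s) * u)) := by
    intro s hs
    refine mul_pos (hp s hs) (sub_pos.2 (exp_lt_exp.2 ?_))
    nlinarith
  rw [e]
  refine (setIntegral_pos_iff_support_of_nonneg_ae ?_ (it.sub iu)).2 ?_
  rotate_left
  · refine lt_of_lt_of_le ?_ (measure_mono (s := Set.Ioi s₀) ?_)
    · simp
    · intro s hs
      refine ⟨?_, lt_of_le_of_lt h1 hs⟩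
      rw [Function.mem_support, Pi.sub_apply, e2]
      exact (hpos s hs).ne'
  · refine (ae_restrict_mem measurableSet_Ioi).mono fun s hs => ?_
    have hs : 1 < s := hs
    simp only [Pi.zero_apply, Pi.sub_apply]
    rw [e2]
    rcases lt_trichotomy s s₀ with h | h | h
    · refine mul_nonneg_of_nonpos_of_nonpos (hn s hs h) (sub_nonpos.2 (exp_le_exp.2 ?_))
      nlinarith
    · simp [h]
    · exact (hpos s h).le

theorem Iz_root {t : ℝ} (ht : 0 ≤ t) (h : Iz t = 0) : 1.044 < t ∧ t < 1.045 := by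
  obtain ⟨c, hc⟩ := Iz_mono
  have hp := Iz_pos
  have hn := Iz_neg
  rw [show (1.044:ℝ) = 1044 / 1000 by norm_num, show (1.045:ℝ) = 1045 / 1000 by norm_num]
  constructor
  · by_contra hh
    rcases (not_lt.1 hh).lt_or_eq with h' | h'
    · have := hc t _ ht h'
      rw [h, mul_zero] at this
      exact absurd this (not_lt.2 (by positivity))
    · rw [← h', h] at hp; exact lt_irrefl _ hp
  · by_contra hh
    rcases (not_lt.1 hh).lt_or_eq with h' | h'
    · have := hc _ t (by norm_num) h'
      rw [h, mul_zero] at this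
      exact absurd this (not_lt.2 (mul_nonpos_of_nonneg_of_nonpos (exp_pos _).le hn.le))
    · rw [h', h] at hn; exact lt_irrefl _ hn

theorem Iz_unique {t u : ℝ} (ht : 0 ≤ t) (hu : 0 ≤ u) (h : Iz t = 0) (h' : Iz u = 0) : t = u := by
  obtain ⟨c, hc⟩ := Iz_mono
  rcases lt_trichotomy t u with k | k | k
  · have := hc _ _ ht k
    simp [h, h'] at this
  · exact k
  · have := hc _ _ hu k
    simp [h, h'] at this

theorem Iz_exists : ∃ t, 0 ≤ t ∧ Iz t = 0 := by
  have hc : ContinuousOn Iz (Set.Icc (1044 / 1000) (1045 / 1000)) :=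
    Iz_cont.mono fun t ht => le_trans (by norm_num) ht.1
  obtain ⟨t, ht, h⟩ := intermediate_value_Icc' (by norm_num) hc ⟨Iz_neg.le, Iz_pos.le⟩
  exact ⟨t, le_trans (by norm_num) ht.1, h⟩

/-- There exists a unique real `t ≥ 0` with
`∫₁^∞ [P(s) − (P(s)² + P(2s))/2] e^{(1−s)t} ds = 0`, and it lies in
`(1.044, 1.045)`. -/
theorem stmt_0 :
    (∃! t : ℝ, 0 ≤ t ∧
      (∫ s in Set.Ioi (1:ℝ),
        (primeZeta s - (primeZeta s ^ 2 + primeZeta (2 * s)) / 2) * Real.exp ((1 - s) * t)) = 0) ∧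
    (∀ t : ℝ, 0 ≤ t →
      (∫ s in Set.Ioi (1:ℝ),
        (primeZeta s - (primeZeta s ^ 2 + primeZeta (2 * s)) / 2) * Real.exp ((1 - s) * t)) = 0 →
      1.044 < t ∧ t < 1.045) := by
  refine ⟨?_, fun t ht h => Iz_root ht h⟩
  obtain ⟨t, ht, h⟩ := Iz_exists
  exact ⟨t, ⟨ht, h⟩, fun u hu => Iz_unique hu.1 ht hu.2 h⟩
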